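/- arXiv:1403.1409 — 5 statements merged into one kernel-verified Lean document; each statement's English description precedes it below -/
import Mathlib

section
/- Let K be an algebraically closed field, S = K[x_1,…,x_r] with r ≥ 3, and J ⊆ S a homogeneous artinian ideal with dim_K [S/J]_n = k and dim_K [S/J]_{n+1} = k−1, where 2 ≤ k ≤ n, [S/J]_t = 0 for t ≥ n+2, J has no minimal generator in degree n+1, and the forms in [J]_n have no common zero in ℙ^{r−1}. Then the set of linear forms ℓ ∈ [S]_1 with ℓ·[S]_{n−1} ⊆ J, together with 0, is a K-vector subspace of [S]_1 of dimension exactly r−2; in particular there exist r−2 linearly independent linear forms annihilating both [S/J]_{n−1} and [S/J]_n, and when r = 3 such a linear form is unique up to scalar multiplication. -/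
open MvPolynomial

/-- The Hilbert function of `S/I` in degree `t`: the dimension over `K` of the image of the
space of homogeneous polynomials of degree `t` in the quotient `S/I`. -/
noncomputable def hilb {K : Type*} [Field K] {σ : Type*} (I : Ideal (MvPolynomial σ K)) (t : ℕ) : ℕ :=
  Module.finrank K
    ((homogeneousSubmodule σ K t).map (Ideal.Quotient.mkₐ K I).toLinearMap)

/-- The ideal generated by the degree-`n` component of `I`, i.e. by all homogeneous elements of
`I` of degree `n`.  Its zero locus is the base locus of the linear system `[I]_n`. -/
noncomputable def compIdeal {K : Type*} [Field K] {σ : Type*} (I : Ideal (MvPolynomial σ K)) (n : ℕ) :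
    Ideal (MvPolynomial σ K) :=
  Ideal.span ((I : Set (MvPolynomial σ K)) ∩ (homogeneousSubmodule σ K n : Set (MvPolynomial σ K)))

open Module in
theorem fin_rn {K D E : Type*} [Field K] [AddCommGroup D] [Module K D] [AddCommGroup E] [Module K E]
    (f : D →ₗ[K] E) (U : Submodule K D) [FiniteDimensional K U] :
    finrank K (U.map f) + finrank K (U ⊓ LinearMap.ker f : Submodule K D) = finrank K U := by
  have h := (f.domRestrict U).finrank_range_add_finrank_ker
  rw [LinearMap.range_domRestrict, LinearMap.ker_domRestrict] at h
  rw [← h, ← Submodule.finrank_map_subtype_eq U, Submodule.map_comap_subtype]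

/-- `f` is injective on `U`. -/
def InjU {K D E : Type*} [Field K] [AddCommGroup D] [Module K D] [AddCommGroup E] [Module K E]
    (f : D →ₗ[K] E) (U : Submodule K D) : Prop := ∀ x ∈ U, f x = 0 → x = 0

open Module in
theorem InjU.finrank {K D E : Type*} [Field K] [AddCommGroup D] [Module K D] [AddCommGroup E]
    [Module K E] {f : D →ₗ[K] E} {U : Submodule K D} [FiniteDimensional K U] (h : InjU f U) :
    finrank K (U.map f) = finrank K U := by
  have h1 := fin_rn f U
  have : (U ⊓ LinearMap.ker f : Submodule K D) = ⊥ := by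
    rw [eq_bot_iff]
    rintro x ⟨hx, hx'⟩
    exact h x hx hx'
  rw [this, finrank_bot] at h1
  omega

theorem InjU.left {K D E : Type*} [Field K] [AddCommGroup D] [Module K D] [AddCommGroup E]
    [Module K E] {f : D →ₗ[K] E} {U : Submodule K D} (h : InjU f U) :
    ∃ g : E →ₗ[K] U, ∀ x : U, g (f x) = x := by
  obtain ⟨g, hg⟩ := (f.domRestrict U).exists_leftInverse_of_injective (by
    rw [LinearMap.ker_eq_bot']
    intro x hx
    exact Subtype.ext (h x x.2 hx))
  exact ⟨g, fun x => LinearMap.congr_fun hg x⟩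

theorem bad_finite {K D E : Type*} [Field K] [AddCommGroup D] [Module K D] [AddCommGroup E]
    [Module K E] {f : D →ₗ[K] E} (g : D →ₗ[K] E) {U : Submodule K D} [FiniteDimensional K U]
    (h : InjU f U) : {t : K | ¬ InjU (f + t • g) U}.Finite := by
  obtain ⟨p, hp⟩ := h.left
  let B : Module.End K U := p ∘ₗ g.domRestrict U
  refine (B.finite_hasEigenvalue.image (fun c => -c⁻¹)).subset ?_
  intro t ht
  simp only [Set.mem_ofPred_eq, InjU, not_forall] at ht
  obtain ⟨x, hx, hx0, hxn⟩ := ht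
  have h1 := congrArg p hx0
  simp only [LinearMap.add_apply, LinearMap.smul_apply, map_add, map_smul, map_zero] at h1
  have h2 := hp ⟨x, hx⟩
  simp only at h2
  rw [h2] at h1
  have ht0 : t ≠ 0 := by
    rintro rfl
    simp only [zero_smul, add_zero] at h1
    exact hxn (congrArg Subtype.val h1)
  refine ⟨-t⁻¹, ?_, by simp⟩
  refine Module.End.hasEigenvalue_of_hasEigenvector (x := ⟨x, hx⟩) ⟨?_, ?_⟩
  · rw [Module.End.mem_eigenspace_iff]
    change p (g x) = _
    have : t • p (g x) = -⟨x, hx⟩ := by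
      rw [eq_neg_iff_add_eq_zero, add_comm]; exact h1
    rw [neg_smul, ← smul_neg, ← this, smul_smul, inv_mul_cancel₀ ht0, one_smul]
  · intro h0
    exact hxn (congrArg Subtype.val h0)

theorem exists_eig {K D E : Type*} [Field K] [IsAlgClosed K] [AddCommGroup D] [Module K D]
    [AddCommGroup E] [Module K E] (f g : D →ₗ[K] E) {U : Submodule K D} [FiniteDimensional K U]
    (hU : U ≠ ⊥) (hg : InjU g U) (hfg : ∀ x ∈ U, ∃ y ∈ U, f x = g y) :
    ∃ x ∈ U, x ≠ 0 ∧ ∃ c : K, f x = c • g x := by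
  obtain ⟨p, hp⟩ := hg.left
  let B : Module.End K U := p ∘ₗ f.domRestrict U
  have : Nontrivial U := Submodule.nontrivial_iff_ne_bot.2 hU
  obtain ⟨c, hc⟩ := Module.End.exists_eigenvalue B
  obtain ⟨x, hx⟩ := hc.exists_hasEigenvector
  refine ⟨x, x.2, fun h => hx.2 (Subtype.ext h), c, ?_⟩
  obtain ⟨y, hy, hxy⟩ := hfg x x.2
  have h1 : p (f x) = c • x := hx.apply_eq_smul
  have h2 := hp ⟨y, hy⟩
  simp only at h2
  rw [hxy, h2] at h1
  rw [hxy, ← map_smul]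
  exact congrArg g (congrArg Subtype.val h1)

section act
variable {K L D : Type*} [Field K] [AddCommGroup D] [Module K D] [AddCommGroup L] [Module K L]

theorem inj_both [Infinite K] (act : L →ₗ[K] D →ₗ[K] D) (U₁ U₂ : Submodule K D)
    [FiniteDimensional K U₁] [FiniteDimensional K U₂]
    (h₁ : ∃ l, InjU (act l) U₁) (h₂ : ∃ l, InjU (act l) U₂) :
    ∃ l, InjU (act l) U₁ ∧ InjU (act l) U₂ := by
  obtain ⟨a, ha⟩ := h₁
  obtain ⟨b, hb⟩ := h₂
  have f1 := bad_finite (act b) ha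
  have f2 := (bad_finite (act a) hb).image (fun t => t⁻¹)
  obtain ⟨t, ht⟩ := ((f1.union f2).union (Set.finite_singleton 0)).exists_notMem
  simp only [Set.mem_union, not_or, Set.mem_ofPred_eq, not_not, Set.mem_image, not_exists,
    not_and, Set.mem_singleton_iff] at ht
  obtain ⟨⟨h1, h2⟩, h3⟩ := ht
  refine ⟨a + t • b, by simpa using h1, ?_⟩
  have h4 : InjU (act b + t⁻¹ • act a) U₂ := by
    by_contra h
    exact h2 _ h (inv_inv t)
  intro x hx hx0
  apply h4 x hx
  have : act b + t⁻¹ • act a = t⁻¹ • act (a + t • b) := by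
    simp [smul_smul, h3, add_comm]
  rw [this, LinearMap.smul_apply, hx0, smul_zero]

open Module in
theorem green [Infinite K] (act : L →ₗ[K] D →ₗ[K] D)
    (hcomm : ∀ a b x, act a (act b x) = act b (act a x)) (Dn : ℕ → Submodule K D)
    (hD : ∀ n a, ∀ x ∈ Dn (n + 1), act a x ∈ Dn n)
    (hfaith : ∀ n, ∀ x ∈ Dn (n + 1), (∀ a, act a x = 0) → x = 0) :
    ∀ n (U : Submodule K D) [FiniteDimensional K U], U ≤ Dn n → finrank K U ≤ n →
      ∃ l, InjU (act l) U := by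
  intro n
  induction n with
  | zero =>
    intro U _ _ h
    refine ⟨0, ?_⟩
    have : U = ⊥ := Submodule.finrank_eq_zero.1 (by omega)
    subst this
    intro x hx _
    simpa using hx
  | succ n ih =>
    intro U _ hU hr
    let F : L → ℕ := fun l => finrank K (U ⊓ LinearMap.ker (act l) : Submodule K D)
    obtain ⟨l, hl⟩ : ∃ l, ∀ m, F l ≤ F m := by
      have hne : (Set.range F).Nonempty := ⟨_, 0, rfl⟩
      obtain ⟨l, hl⟩ := Nat.sInf_mem hne
      exact ⟨l, fun m => hl ▸ Nat.sInf_le ⟨m, rfl⟩⟩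
    refine ⟨l, ?_⟩
    by_contra hcon
    have hpos : F l ≠ 0 := by
      intro h0
      have := Submodule.finrank_eq_zero.1 h0
      apply hcon
      intro x hx hx0
      have : x ∈ (U ⊓ LinearMap.ker (act l) : Submodule K D) := ⟨hx, hx0⟩
      simp_all
    have hrn := fin_rn (act l) U
    change _ + F l = _ at hrn
    obtain ⟨l₁, h₁⟩ := ih (U.map (act l)) (by
      rintro _ ⟨x, hx, rfl⟩
      exact hD n l x (hU hx)) (by omega)
    have key : ∀ m, InjU (act m) (U.map (act l)) → ∀ x ∈ U, act l x = 0 → act m x = 0 := by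
      intro m hm
      have hle : (U ⊓ LinearMap.ker (act m) : Submodule K D) ≤ U ⊓ LinearMap.ker (act l) := by
        rintro x ⟨hx, hx0⟩
        refine ⟨hx, hm _ ⟨x, hx, rfl⟩ ?_⟩
        rw [hcomm, show act m x = 0 from hx0, map_zero]
      have heq := Submodule.eq_of_le_of_finrank_le hle (hl m)
      intro x hx hx0
      have : x ∈ (U ⊓ LinearMap.ker (act l) : Submodule K D) := ⟨hx, hx0⟩
      rw [← heq] at this
      exact this.2
    apply hcon
    intro x hx hx0
    apply hfaith n x (hU hx)
    intro a
    obtain ⟨t, ht⟩ := ((bad_finite (act a) h₁).union (Set.finite_singleton 0)).exists_notMem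
    simp only [Set.mem_union, not_or, Set.mem_ofPred_eq, not_not, Set.mem_singleton_iff] at ht
    have e1 := key l₁ h₁ x hx hx0
    have e2 := key (l₁ + t • a) (by simpa using ht.1) x hx hx0
    simpa [e1, ht.2] using e2

open Module in
theorem pure_exists [IsAlgClosed K] (act : L →ₗ[K] D →ₗ[K] D)
    (hcomm : ∀ a b x, act a (act b x) = act b (act a x)) (l : L) :
    ∀ N (U : Submodule K D) [FiniteDimensional K U], finrank K U = N → U ≠ ⊥ → InjU (act l) U →
      InjU (act l) (U.map (act l)) → (∀ a, ∀ x ∈ U, ∃ y ∈ U, act a x = act l y) →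
      ∃ x ∈ U, x ≠ 0 ∧ ∀ a, ∃ c : K, act a x = c • act l x := by
  intro N
  induction N using Nat.strong_induction_on with
  | _ N ih =>
  intro U _ hN hU h1 h2 h3
  by_cases hall : ∀ a, ∃ c : K, ∀ x ∈ U, act a x = c • act l x
  · obtain ⟨x, hx, hx0⟩ := Submodule.exists_mem_ne_zero_of_ne_bot hU
    exact ⟨x, hx, hx0, fun a => (hall a).imp fun c hc => hc x hx⟩
  · push Not at hall
    obtain ⟨a, ha⟩ := hall
    obtain ⟨x, hx, hx0, c, hc⟩ := exists_eig (act a) (act l) hU h1 (h3 a)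
    obtain ⟨z, hz, hz'⟩ := ha c
    let E : Submodule K D := U ⊓ LinearMap.ker (act a - c • act l)
    have hEU : E ≤ U := inf_le_left
    have hmem : ∀ y, y ∈ E ↔ y ∈ U ∧ act a y = c • act l y := by
      intro y
      simp [E, sub_eq_zero]
    have hlt : E < U := lt_of_le_of_ne hEU (by
      intro h
      rw [← h, hmem] at hz
      exact hz' hz.2)
    have : FiniteDimensional K E := Submodule.finiteDimensional_of_le hEU
    obtain ⟨y, hy, hy'⟩ := ih (finrank K E) (hN ▸ Submodule.finrank_lt_finrank_of_lt hlt) E rfl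
      (by
        intro h
        have : x ∈ E := (hmem x).2 ⟨hx, hc⟩
        rw [h] at this
        exact hx0 (by simpa using this))
      (fun y hy => h1 y (hEU hy))
      (fun y hy => h2 y (Submodule.map_mono hEU hy))
      (by
        intro b y hy
        obtain ⟨hyU, hyc⟩ := (hmem y).1 hy
        obtain ⟨w, hw, hbw⟩ := h3 b y hyU
        refine ⟨w, (hmem w).2 ⟨hw, ?_⟩, hbw⟩
        rw [← sub_eq_zero]
        apply h2
        · obtain ⟨w', hw', e⟩ := h3 a w hw
          refine ⟨w' - c • w, U.sub_mem hw' (U.smul_mem _ hw), ?_⟩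
          rw [map_sub, map_smul, e]
        · rw [map_sub, map_smul, hcomm l a, ← hbw, hcomm a b, hyc, map_smul, hcomm l b, sub_self])
    exact ⟨y, hEU hy, hy'⟩
end act

section main
variable {K L D : Type*} [Field K] [IsAlgClosed K] [AddCommGroup D] [Module K D]
  [AddCommGroup L] [Module K L]

open Module in
theorem lemA (act : L →ₗ[K] D →ₗ[K] D)
    (hcomm : ∀ a b x, act a (act b x) = act b (act a x))
    (V W : Submodule K D) [FiniteDimensional K V] [FiniteDimensional K W]
    (hWV : ∀ a, ∀ x ∈ W, act a x ∈ V) (hdim : finrank K V = finrank K W + 1)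
    (hGV : ∃ l, InjU (act l) V)
    (hG2 : ∀ a, finrank K (V.map (act a)) < finrank K V → ∃ l, InjU (act l) (V.map (act a)))
    (hP : ∀ v ∈ V, v ≠ 0 → ∀ l, ¬ ∀ a, ∃ c : K, act a v = c • act l v)
    (a : L) (ha : W.map (act a) ≠ ⊥) :
    finrank K (W.map (act a)) < finrank K (V.map (act a)) := by
  by_contra hcon
  push Not at hcon
  have h1 : finrank K (W.map (act a)) ≤ finrank K W := Submodule.finrank_map_le _ _
  obtain ⟨l, hl1, hl2⟩ := inj_both act V (V.map (act a)) hGV (hG2 a (by omega))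
  have hUV : W.map (act a) ≤ V := by
    rintro _ ⟨x, hx, rfl⟩
    exact hWV a x hx
  have hlU : InjU (act l) (W.map (act a)) := fun x hx => hl1 x (hUV hx)
  have hle : (W.map (act a)).map (act l) ≤ V.map (act a) := by
    rintro _ ⟨_, ⟨x, hx, rfl⟩, rfl⟩
    exact ⟨act l x, hWV l x hx, hcomm _ _ _⟩
  have heq := Submodule.eq_of_le_of_finrank_le hle (by rw [hlU.finrank]; exact hcon)
  obtain ⟨x, hx, hx0, hxa⟩ := pure_exists act hcomm l _ (W.map (act a)) rfl ha hlU
    (by rw [heq]; exact hl2) (by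
      rintro b _ ⟨x, hx, rfl⟩
      have : act b (act a x) ∈ V.map (act a) := ⟨act b x, hWV b x hx, hcomm _ _ _⟩
      rw [← heq] at this
      obtain ⟨y, hy, e⟩ := this
      exact ⟨y, hy, e.symm⟩)
  exact hP x (hUV hx) hx0 l hxa

open Module in
theorem lemB (act : L →ₗ[K] D →ₗ[K] D)
    (hcomm : ∀ a b x, act a (act b x) = act b (act a x))
    (V W : Submodule K D) [FiniteDimensional K V] [FiniteDimensional K W]
    (hWV : ∀ a, ∀ x ∈ W, act a x ∈ V) (hdim : finrank K V = finrank K W + 1)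
    (hGV : ∃ l, InjU (act l) V) (hGW : ∃ l, InjU (act l) W)
    (hP : ∀ v ∈ V, v ≠ 0 → ∀ l, ¬ ∀ a, ∃ c : K, act a v = c • act l v)
    (a : L) (ha : ¬ InjU (act a) W) :
    finrank K (V.map (act a)) ≤ finrank K (W.map (act a)) := by
  obtain ⟨l, hlV, hlW⟩ := inj_both act V W hGV hGW
  have hV := fin_rn (act a) V
  have hW := fin_rn (act a) W
  set E : Submodule K D := W ⊓ LinearMap.ker (act a) with hE
  have hEW : E ≤ W := inf_le_left
  have : FiniteDimensional K E := Submodule.finiteDimensional_of_le hEW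
  have hlE : InjU (act l) E := fun x hx => hlW x (hEW hx)
  have hE0 : E ≠ ⊥ := by
    intro h
    apply ha
    intro x hx hx0
    have : x ∈ E := ⟨hx, hx0⟩
    rw [h] at this
    simpa using this
  suffices h : finrank K E < finrank K (V ⊓ LinearMap.ker (act a) : Submodule K D) by omega
  rw [← hlE.finrank]
  have hmem : ∀ b, ∀ x ∈ E, act b x ∈ (V ⊓ LinearMap.ker (act a) : Submodule K D) := by
    rintro b x ⟨hx, hx0⟩
    refine ⟨hWV b x hx, ?_⟩
    change act a (act b x) = 0
    rw [hcomm, show act a x = 0 from hx0, map_zero]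
  have : FiniteDimensional K (V ⊓ LinearMap.ker (act a) : Submodule K D) :=
    Submodule.finiteDimensional_of_le inf_le_left
  apply Submodule.finrank_lt_finrank_of_lt
  refine lt_of_le_of_ne ?_ ?_
  · rintro _ ⟨x, hx, rfl⟩
    exact hmem l x hx
  · intro heq
    obtain ⟨x, hx, hx0, hxa⟩ := pure_exists act hcomm l _ E rfl hE0 hlE (by
      intro x hx
      rw [heq] at hx
      exact hlV x hx.1) (by
      intro b x hx
      have := hmem b x hx
      rw [← heq] at this
      obtain ⟨y, hy, e⟩ := this
      exact ⟨y, hy, e.symm⟩)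
    refine hP (act l x) (hWV l x (hEW hx)) (fun h => hx0 (hlE x hx h)) l ?_
    intro b
    obtain ⟨c, hc⟩ := hxa b
    exact ⟨c, by rw [hcomm, hc, map_smul]⟩

open Module in
theorem main_abs (act : L →ₗ[K] D →ₗ[K] D)
    (hcomm : ∀ a b x, act a (act b x) = act b (act a x))
    (V W : Submodule K D) [FiniteDimensional K V] [FiniteDimensional K W]
    (hWV : ∀ a, ∀ x ∈ W, act a x ∈ V) (hdim : finrank K V = finrank K W + 1)
    (hW0 : W ≠ ⊥)
    (hGV : ∃ l, InjU (act l) V) (hGW : ∃ l, InjU (act l) W)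
    (hG2 : ∀ a, finrank K (V.map (act a)) < finrank K V → ∃ l, InjU (act l) (V.map (act a)))
    (hP : ∀ v ∈ V, v ≠ 0 → ∀ l, ¬ ∀ a, ∃ c : K, act a v = c • act l v)
    (Z : Submodule K L) (hZ : ∀ a, a ∈ Z ↔ ∀ v ∈ V, act a v = 0) :
    ∃ l m : L, l ∉ Z ∧ (∀ c : K, m - c • l ∉ Z) ∧
      ∀ m' : L, ∃ c d : K, m' - c • m - d • l ∈ Z := by
  have hV0 : V ≠ ⊥ := by
    intro h
    rw [h, finrank_bot] at hdim
    omega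
  have hinjW : ∀ a, a ∉ Z → InjU (act a) W := by
    intro a ha
    by_contra hcon
    have h1 := lemB act hcomm V W hWV hdim hGV hGW hP a hcon
    by_cases h0 : W.map (act a) = ⊥
    · rw [h0, finrank_bot] at h1
      have h2 : V.map (act a) = ⊥ := Submodule.finrank_eq_zero.1 (by omega)
      apply ha
      rw [hZ]
      intro v hv
      have : act a v ∈ V.map (act a) := ⟨v, hv, rfl⟩
      rw [h2] at this
      simpa using this
    · have h2 := lemA act hcomm V W hWV hdim hGV hG2 hP a h0
      omega
  have hinjV : ∀ a, a ∉ Z → InjU (act a) V := by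
    intro a ha
    have h1 := hinjW a ha
    have h2 := lemA act hcomm V W hWV hdim hGV hG2 hP a (by
      intro h
      have := h1.finrank
      rw [h, finrank_bot] at this
      exact hW0 (Submodule.finrank_eq_zero.1 this.symm))
    rw [h1.finrank] at h2
    have h3 := fin_rn (act a) V
    have h4 : (V ⊓ LinearMap.ker (act a) : Submodule K D) = ⊥ := by
      have : FiniteDimensional K (V ⊓ LinearMap.ker (act a) : Submodule K D) :=
        Submodule.finiteDimensional_of_le inf_le_left
      exact Submodule.finrank_eq_zero.1 (by omega)
    intro x hx hx0
    have : x ∈ (V ⊓ LinearMap.ker (act a) : Submodule K D) := ⟨hx, hx0⟩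
    rw [h4] at this
    simpa using this
  obtain ⟨v, hv, hv0⟩ := Submodule.exists_mem_ne_zero_of_ne_bot hV0
  obtain ⟨l, hl⟩ := hGV
  have hlZ : l ∉ Z := by
    intro h
    exact hv0 (hl v hv ((hZ l).1 h v hv))
  obtain ⟨m, hm⟩ : ∃ m, ∀ c : K, m - c • l ∉ Z := by
    by_contra hcon
    push Not at hcon
    refine hP v hv hv0 l ?_
    intro a
    obtain ⟨c, hc⟩ := hcon a
    refine ⟨c, ?_⟩
    have := (hZ _).1 hc v hv
    simpa [sub_eq_zero] using this
  refine ⟨l, m, hlZ, hm, ?_⟩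
  have hlW := hinjW l hlZ
  obtain ⟨w, hw, hwn⟩ : ∃ w ∈ W, ¬ ∃ y ∈ W, act m w = act l y := by
    by_contra hcon
    push Not at hcon
    obtain ⟨x, hx, hx0, c, hc⟩ := exists_eig (act m) (act l) hW0 hlW hcon
    exact hx0 (hinjW _ (hm c) x hx (by simp [hc]))
  have hVeq : W.map (act l) ⊔ Submodule.span K {act m w} = V := by
    have hle : W.map (act l) ⊔ Submodule.span K {act m w} ≤ V := by
      apply sup_le
      · rintro _ ⟨x, hx, rfl⟩
        exact hWV l x hx
      · rw [Submodule.span_singleton_le_iff_mem]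
        exact hWV m w hw
    apply Submodule.eq_of_le_of_finrank_le hle
    rw [hdim, ← hlW.finrank]
    have : FiniteDimensional K (W.map (act l) ⊔ Submodule.span K {act m w} : Submodule K D) :=
      Submodule.finiteDimensional_of_le hle
    apply Nat.succ_le_of_lt
    apply Submodule.finrank_lt_finrank_of_lt
    refine lt_of_le_of_ne le_sup_left ?_
    intro h
    have : act m w ∈ W.map (act l) := by
      rw [h]
      exact Submodule.mem_sup_right (Submodule.mem_span_singleton_self _)
    obtain ⟨y, hy, e⟩ := this
    exact hwn ⟨y, hy, e.symm⟩
  have hdec : ∀ v ∈ V, ∃ y ∈ W, ∃ c : K, v = act l y + c • act m w := by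
    intro v hv
    rw [← hVeq, Submodule.mem_sup] at hv
    obtain ⟨_, ⟨y, hy, rfl⟩, z, hz, e⟩ := hv
    obtain ⟨c, rfl⟩ := Submodule.mem_span_singleton.1 hz
    exact ⟨y, hy, c, e.symm⟩
  intro m'
  obtain ⟨w1, hw1, c, hc⟩ := hdec (act m' w) (hWV m' w hw)
  have hbw : act (m' - c • m) w = act l w1 := by
    simp [hc]
  obtain ⟨x, hx, hx0, d, hd⟩ := exists_eig (act (m' - c • m)) (act l) hV0 hl (by
    intro v hv
    obtain ⟨w2, hw2, d, rfl⟩ := hdec v hv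
    refine ⟨act (m' - c • m) w2 + d • act m w1,
      V.add_mem (hWV _ _ hw2) (V.smul_mem _ (hWV _ _ hw1)), ?_⟩
    rw [map_add, map_smul, map_add, map_smul, hcomm _ m, hbw, hcomm _ l w2, hcomm m l])
  refine ⟨c, d, ?_⟩
  by_contra hcon
  refine hx0 (hinjV _ hcon x hx ?_)
  rw [map_sub, LinearMap.sub_apply, hd]
  simp

open Module in
theorem codim_two (Z : Submodule K L) [FiniteDimensional K L] (l m : L) (hl : l ∉ Z)
    (hm : ∀ c : K, m - c • l ∉ Z) (h : ∀ m' : L, ∃ c d : K, m' - c • m - d • l ∈ Z) :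
    finrank K Z + 2 = finrank K L := by
  rw [← Submodule.finrank_quotient_add_finrank Z, add_comm]
  congr 1
  have hb : LinearIndependent K ![Z.mkQ l, Z.mkQ m] := by
    rw [LinearIndependent.pair_iff' (by simpa using hl)]
    intro c hc
    apply hm c
    rw [← Submodule.ker_mkQ Z, LinearMap.mem_ker, map_sub, map_smul, hc, sub_self]
  have hs : ⊤ ≤ Submodule.span K (Set.range ![Z.mkQ l, Z.mkQ m]) := by
    intro x _
    obtain ⟨m', rfl⟩ := Submodule.mkQ_surjective Z x
    obtain ⟨c, d, hcd⟩ := h m'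
    rw [← Submodule.ker_mkQ Z, LinearMap.mem_ker] at hcd
    simp only [Matrix.range_cons, Matrix.range_empty, Set.union_empty, Set.singleton_union]
    rw [Submodule.mem_span_pair]
    refine ⟨d, c, ?_⟩
    simp only [map_sub, map_smul] at hcd
    rw [← sub_eq_zero, ← neg_eq_zero, ← hcd]
    abel
  rw [finrank_eq_card_basis (Basis.mk hb hs)]
  simp
end main

section conc
variable {K : Type*} [Field K] {r : ℕ}

/-- Truncation to degree `n` modulo `J`. -/
noncomputable def trunc (J : Ideal (MvPolynomial (Fin r) K)) (n : ℕ) :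
    MvPolynomial (Fin r) K →ₗ[K] (MvPolynomial (Fin r) K ⧸ J) :=
  (Ideal.Quotient.mkₐ K J).toLinearMap ∘ₗ homogeneousComponent n

/-- Degree `n` part of the inverse system of `J`. -/
noncomputable def invSys (J : Ideal (MvPolynomial (Fin r) K)) (n : ℕ) :
    Submodule K (Module.Dual K (MvPolynomial (Fin r) K)) :=
  (LinearMap.ker (trunc J n)).dualAnnihilator

theorem mem_invSys (J : Ideal (MvPolynomial (Fin r) K)) (n : ℕ)
    (f : Module.Dual K (MvPolynomial (Fin r) K)) :
    f ∈ invSys J n ↔ ∀ p, homogeneousComponent n p ∈ J → f p = 0 := by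
  simp [invSys, Submodule.mem_dualAnnihilator, trunc, Ideal.Quotient.eq_zero_iff_mem]

theorem finrank_invSys (J : Ideal (MvPolynomial (Fin r) K)) (n : ℕ) :
    Module.finrank K (invSys J n) = hilb J n := by
  rw [invSys, ← (Submodule.dualQuotEquivDualAnnihilator _).finrank_eq, Subspace.dual_finrank_eq,
    (trunc J n).quotKerEquivRange.finrank_eq, hilb, trunc, LinearMap.range_comp]
  have : LinearMap.range (homogeneousComponent (σ := Fin r) (R := K) n)
      = homogeneousSubmodule (Fin r) K n := by
    ext p
    constructor
    · rintro ⟨q, rfl⟩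
      exact homogeneousComponent_mem n q
    · intro hp
      exact ⟨p, homogeneousComponent_eq_self hp⟩
  rw [this]

/-- Contraction action of linear forms. -/
noncomputable def ctr : (homogeneousSubmodule (Fin r) K 1) →ₗ[K]
    Module.Dual K (MvPolynomial (Fin r) K) →ₗ[K] Module.Dual K (MvPolynomial (Fin r) K) :=
  LinearMap.mk₂ K (fun a f => f ∘ₗ LinearMap.mulLeft K (a : MvPolynomial (Fin r) K))
    (by intro a b f; ext p; simp [add_mul])
    (by intro c a f; ext p; simp)
    (by intro a f g; ext p; simp)
    (by intro c a f; ext p; simp)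

theorem ctr_apply (a : homogeneousSubmodule (Fin r) K 1)
    (f : Module.Dual K (MvPolynomial (Fin r) K)) (p : MvPolynomial (Fin r) K) :
    ctr a f p = f (a * p) := rfl

theorem comp_succ (a : MvPolynomial (Fin r) K) (ha : a.IsHomogeneous 1) (n : ℕ)
    (p : MvPolynomial (Fin r) K) :
    homogeneousComponent (n + 1) (a * p) = a * homogeneousComponent n p := by
  induction p using MvPolynomial.induction_on' with
  | monomial d c =>
    have h1 := isHomogeneous_monomial (d := d) c rfl
    have h2 := ha.mul h1
    rw [homogeneousComponent_of_mem h1, homogeneousComponent_of_mem h2]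
    by_cases h : n = d.degree
    · rw [if_pos h, if_pos (by omega)]
    · rw [if_neg h, if_neg (by omega), mul_zero]
  | add p q hp hq => simp [mul_add, hp, hq]

theorem ctr_mem (J : Ideal (MvPolynomial (Fin r) K)) (n : ℕ)
    (a : homogeneousSubmodule (Fin r) K 1) (f : Module.Dual K (MvPolynomial (Fin r) K))
    (hf : f ∈ invSys J (n + 1)) : ctr a f ∈ invSys J n := by
  rw [mem_invSys] at hf ⊢
  intro p hp
  rw [ctr_apply]
  apply hf
  rw [comp_succ _ a.2]
  exact J.mul_mem_left _ hp

theorem ctr_comm (a b : homogeneousSubmodule (Fin r) K 1)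
    (f : Module.Dual K (MvPolynomial (Fin r) K)) : ctr a (ctr b f) = ctr b (ctr a f) := by
  refine LinearMap.ext fun p => ?_
  simp only [ctr_apply, mul_left_comm]

theorem invSys_le (J : Ideal (MvPolynomial (Fin r) K)) (n : ℕ) : invSys J n ≤ invSys ⊥ n := by
  intro f hf
  rw [mem_invSys] at hf ⊢
  intro p hp
  rw [Ideal.mem_bot] at hp
  exact hf p (hp ▸ J.zero_mem)

theorem ctr_faith (n : ℕ) (f : Module.Dual K (MvPolynomial (Fin r) K))
    (hf : f ∈ invSys ⊥ (n + 1)) (h : ∀ a, ctr a f = 0) : f = 0 := by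
  rw [mem_invSys] at hf
  refine LinearMap.ext fun p => ?_
  rw [LinearMap.zero_apply]
  induction p using MvPolynomial.induction_on with
  | C c =>
    apply hf
    rw [homogeneousComponent_eq_zero _ _ (by simp)]
    simp
  | add p q hp hq => rw [map_add, hp, hq, add_zero]
  | mul_X p i _ =>
    have := LinearMap.congr_fun (h ⟨X i, isHomogeneous_X K i⟩) p
    rw [ctr_apply] at this
    rw [mul_comm]
    exact this

theorem no_pure (J : Ideal (MvPolynomial (Fin r) K)) (n : ℕ)
    (hbpf : ∀ v : Fin r → K, v ≠ 0 → ∃ f ∈ J, f.IsHomogeneous (n + 1) ∧ eval v f ≠ 0)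
    (v : Module.Dual K (MvPolynomial (Fin r) K)) (hv : v ∈ invSys J (n + 1)) (hv0 : v ≠ 0)
    (l : homogeneousSubmodule (Fin r) K 1) : ¬ ∀ a, ∃ c : K, ctr a v = c • ctr l v := by
  intro h
  choose c hc using h
  let p : Fin r → K := fun i => c ⟨X i, isHomogeneous_X K i⟩
  have hX : ∀ i g, v (X i * g) = p i * v (l * g) := by
    intro i g
    have := LinearMap.congr_fun (hc ⟨X i, isHomogeneous_X K i⟩) g
    simpa [ctr_apply] using this
  have hmon : ∀ (d : Fin r →₀ ℕ) (g : MvPolynomial (Fin r) K),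
      v (monomial d 1 * g) = eval p (monomial d 1) * v ((l : MvPolynomial (Fin r) K) ^ d.degree * g) := by
    intro d
    induction d using Finsupp.induction_linear with
    | zero => intro g; simp
    | add d e hd he =>
      intro g
      have : (monomial (d + e) (1 : K)) = monomial d 1 * monomial e 1 := by simp [monomial_mul]
      rw [this, mul_assoc, hd, mul_left_comm (_ ^ d.degree), he, map_mul (eval p), map_add, pow_add,
        ← mul_assoc, mul_comm (_ ^ e.degree), mul_assoc (_ ^ d.degree),
        mul_assoc (_ ^ d.degree), mul_comm g]
    | single i k =>
      have hk : (monomial (Finsupp.single i k) (1 : K)) = X i ^ k := by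
        rw [X_pow_eq_monomial]
      rw [hk, Finsupp.degree_single]
      induction k with
      | zero => intro g; simp
      | succ k ih =>
        intro g
        rw [pow_succ, mul_assoc, ih (by rw [X_pow_eq_monomial]), mul_left_comm, hX]
        simp only [map_mul, map_pow, eval_X, pow_succ]
        rw [← mul_assoc, mul_comm _ (l : MvPolynomial (Fin r) K), ← mul_assoc]
  have hhom : ∀ f : MvPolynomial (Fin r) K, f.IsHomogeneous (n + 1) →
      v f = eval p f * v ((l : MvPolynomial (Fin r) K) ^ (n + 1)) := by
    intro f hf
    conv_lhs => rw [f.as_sum]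
    conv_rhs => rw [f.as_sum]
    rw [map_sum, map_sum, Finset.sum_mul]
    refine Finset.sum_congr rfl fun d hd => ?_
    have hdeg : d.degree = n + 1 := by
      rw [Finsupp.degree_eq_weight_one]
      exact hf (mem_support_iff.1 hd)
    have h1 : monomial d (coeff d f) = coeff d f • monomial d (1 : K) := by
      simp [smul_monomial]
    have h2 := hmon d 1
    rw [mul_one, mul_one, hdeg] at h2
    rw [h1, map_smul, h2, smul_eval, smul_eq_mul, mul_assoc]
  have hne : v ((l : MvPolynomial (Fin r) K) ^ (n + 1)) ≠ 0 := by
    intro h0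
    apply hv0
    refine LinearMap.ext fun f => ?_
    have h1 := (mem_invSys _ _ _).1 hv (f - homogeneousComponent (n + 1) f) (by
      rw [map_sub, homogeneousComponent_eq_self (homogeneousComponent_isHomogeneous _ f), sub_self]
      exact J.zero_mem)
    rw [map_sub, sub_eq_zero] at h1
    rw [h1, hhom _ (homogeneousComponent_isHomogeneous _ f), h0, mul_zero]
    rfl
  have hp : p ≠ 0 := by
    intro hp
    apply hv0
    refine ctr_faith n v (invSys_le J _ hv) fun a => ?_
    have h3 : v ((l : MvPolynomial (Fin r) K) ^ (n + 1)) = 0 := by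
      rw [hhom _ (by simpa using IsHomogeneous.pow l.2 (n + 1)), map_pow]
      have : eval p (l : MvPolynomial (Fin r) K) = 0 := by
        rw [hp]
        have := (show (l : MvPolynomial (Fin r) K).IsHomogeneous 1 from l.2).coeff_eq_zero
          (d := 0) (by simp)
        rw [eval_zero, constantCoeff_eq, this]
      rw [this]
      simp
    exact absurd h3 hne
  obtain ⟨f, hfJ, hf, hfp⟩ := hbpf p hp
  have h1 := (mem_invSys _ _ _).1 hv f (by rwa [homogeneousComponent_eq_self hf])
  rw [hhom f hf] at h1
  exact (mul_ne_zero hfp hne) h1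

theorem mem_of_invSys (J : Ideal (MvPolynomial (Fin r) K)) (n : ℕ) (f : MvPolynomial (Fin r) K)
    (hf : f.IsHomogeneous n) (h : ∀ v ∈ invSys J n, v f = 0) : f ∈ J := by
  by_contra hcon
  have : f ∉ LinearMap.ker (trunc J n) := by
    simpa [trunc, homogeneousComponent_eq_self hf, Ideal.Quotient.eq_zero_iff_mem] using hcon
  obtain ⟨v, hv, hle⟩ := Submodule.exists_le_ker_of_notMem this
  exact hv (h v ((Submodule.mem_dualAnnihilator _).2 fun w hw => hle hw))

theorem finrank_lin : Module.finrank K (homogeneousSubmodule (Fin r) K 1) = r := by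
  rw [homogeneousSubmodule_one_eq_span_X, finrank_span_eq_card (linearIndependent_X (Fin r) K)]
  simp
end conc

/-- **Lemma (the annihilating linear forms form a codimension-2 space).**
Let `K` be algebraically closed, `S = K[x_1,…,x_r]` with `r ≥ 3`, and `J ⊆ S` a homogeneous
artinian ideal with `dim [S/J]_n = k`, `dim [S/J]_{n+1} = k-1` (`2 ≤ k ≤ n`), `[S/J]_t = 0` for
`t ≥ n+2`, no minimal generator of `J` in degree `n+1`, and such that the forms in `[J]_n` have
no common zero in `ℙ^{r-1}`.  Then the set of linear forms `ℓ` with `ℓ·[S]_{n-1} ⊆ J` (together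
with `0`) is a `K`-vector subspace of `[S]_1` of dimension exactly `r-2`; in particular there
are `r-2` linearly independent linear forms annihilating both `[S/J]_{n-1}` and `[S/J]_n`, and
when `r = 3` such a linear form is unique up to scalar multiplication. -/
theorem annihilating_linear_forms_subspace
    {K : Type*} [Field K] [IsAlgClosed K] {r n k : ℕ} (hr : 3 ≤ r)
    (J : Ideal (MvPolynomial (Fin r) K))
    (hJhom : ∀ f ∈ J, ∀ t : ℕ, homogeneousComponent t f ∈ J)
    (hk : 2 ≤ k) (hkn : k ≤ n)
    (hn : hilb J n = k) (hn1 : hilb J (n + 1) + 1 = k)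
    (htail : ∀ t, n + 2 ≤ t → hilb J t = 0)
    (hnomingen : ∀ f ∈ J, f.IsHomogeneous (n + 1) → f ∈ compIdeal J n)
    (hbpf : ∀ v : Fin r → K, v ≠ 0 → ∃ f ∈ J, f.IsHomogeneous n ∧ eval v f ≠ 0) :
    ∃ W : Submodule K (MvPolynomial (Fin r) K),
      (W : Set (MvPolynomial (Fin r) K)) =
        {ℓ : MvPolynomial (Fin r) K | ℓ.IsHomogeneous 1 ∧
          ∀ h : MvPolynomial (Fin r) K, h.IsHomogeneous (n - 1) → ℓ * h ∈ J} ∧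
      Module.finrank K W = r - 2 ∧
      (∀ ℓ ∈ W, ∀ h : MvPolynomial (Fin r) K, h.IsHomogeneous n → ℓ * h ∈ J) ∧
      (r = 3 → ∀ ℓ₁ ℓ₂ : MvPolynomial (Fin r) K, ℓ₁ ∈ W → ℓ₂ ∈ W → ℓ₁ ≠ 0 →
        ∃ c : K, ℓ₂ = c • ℓ₁) := by
  obtain ⟨n, rfl⟩ : ∃ n', n = n' + 1 := ⟨n - 1, by omega⟩
  have hfV := finrank_invSys J (n + 1)
  have hfW := finrank_invSys J (n + 1 + 1)
  rw [hn] at hfV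
  have : FiniteDimensional K (invSys J (n + 1)) := FiniteDimensional.of_finrank_pos (by omega)
  have : FiniteDimensional K (invSys J (n + 1 + 1)) := FiniteDimensional.of_finrank_pos (by omega)
  have hL : Module.finrank K (homogeneousSubmodule (Fin r) K 1) = r := finrank_lin
  have : FiniteDimensional K (homogeneousSubmodule (Fin r) K 1) :=
    FiniteDimensional.of_finrank_pos (by omega)
  let Z : Submodule K (homogeneousSubmodule (Fin r) K 1) :=
    { carrier := {a | ∀ v ∈ invSys J (n + 1), ctr a v = 0}
      add_mem' := by
        intro a b ha hb v hv
        rw [map_add, LinearMap.add_apply, ha v hv, hb v hv, add_zero]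
      zero_mem' := by
        intro v hv
        simp
      smul_mem' := by
        intro c a ha v hv
        rw [map_smul, LinearMap.smul_apply, ha v hv, smul_zero] }
  have hZ : ∀ a, a ∈ Z ↔ ∀ v ∈ invSys J (n + 1), ctr a v = 0 := fun a => Iff.rfl
  have hgreen := green (K := K) (ctr (r := r)) ctr_comm (fun n => invSys ⊥ n)
    (fun n a x hx => ctr_mem ⊥ n a x hx) ctr_faith
  obtain ⟨l, m, hl, hm, hlm⟩ := main_abs (ctr (r := r)) ctr_comm (invSys J (n + 1))
    (invSys J (n + 1 + 1)) (fun a x hx => ctr_mem J _ a x hx) (by omega)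
    (by
      intro h
      rw [h, finrank_bot] at hfW
      omega)
    (hgreen (n + 1) _ (invSys_le J _) (by omega))
    (hgreen (n + 1 + 1) _ (invSys_le J _) (by omega))
    (by
      intro a ha
      refine hgreen n _ ?_ (by omega)
      rintro _ ⟨x, hx, rfl⟩
      exact ctr_mem _ n a x (invSys_le J _ hx))
    (no_pure J n hbpf) Z hZ
  have hrank := codim_two Z l m hl hm hlm
  rw [hL] at hrank
  have hdim : Module.finrank K (Z.map (homogeneousSubmodule (Fin r) K 1).subtype) = r - 2 := by
    rw [Submodule.finrank_map_subtype_eq]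
    omega
  refine ⟨Z.map (homogeneousSubmodule (Fin r) K 1).subtype, ?_, hdim, ?_, ?_⟩
  · ext a
    constructor
    · rintro ⟨a, ha, rfl⟩
      refine ⟨a.2, ?_⟩
      intro h hh
      refine mem_of_invSys J (n + 1) _ ?_ ?_
      · rw [add_comm n 1]
        exact IsHomogeneous.mul a.2 hh
      · intro v hv
        exact LinearMap.congr_fun (ha v hv) h
    · rintro ⟨ha, hah⟩
      refine ⟨⟨a, ha⟩, ?_, rfl⟩
      intro v hv
      refine LinearMap.ext fun p => ?_
      rw [ctr_apply]
      refine (mem_invSys _ _ _).1 hv _ ?_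
      rw [comp_succ _ ha]
      exact hah _ (homogeneousComponent_isHomogeneous _ _)
  · rintro _ ⟨a, ha, rfl⟩ h hh
    refine mem_of_invSys J (n + 1 + 1) _ ?_ ?_
    · rw [add_comm (n + 1) 1]
      exact IsHomogeneous.mul a.2 hh
    · intro v hv
      have : ctr a v = 0 := by
        refine ctr_faith n _ (invSys_le J _ (ctr_mem J _ a v hv)) fun b => ?_
        rw [ctr_comm]
        exact ha _ (ctr_mem J _ b v hv)
      exact LinearMap.congr_fun this h
  · rintro rfl l₁ l₂ h₁ h₂ h0
    obtain ⟨c, hc⟩ := (finrank_eq_one_iff_of_nonzero' (⟨l₁, h₁⟩ :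
      Z.map (homogeneousSubmodule (Fin 3) K 1).subtype)
      (fun h => h0 (congrArg Subtype.val h))).1 hdim ⟨l₂, h₂⟩
    exact ⟨c, (congrArg Subtype.val hc).symm⟩
end

section
/- Let M be a finitely generated graded module over R = K[x_0,…,x_r] with initial degree 0, and suppose M has no minimal generator in degree 1, i.e. M_1 = R_1·M_0, and dim_K M_1 > 2·dim_K M_0. Let L, L′ ∈ [R]_1 and suppose ℓ̄_1,…,ℓ̄_{r−2}, ℓ̄′_1,…,ℓ̄′_{r−2} ∈ [R]_1 are such that the image of ×ℓ̄_i : M_0 → M_1 is contained in the image of ×L : M_0 → M_1 for each i, and the image of ×ℓ̄′_i : M_0 → M_1 is contained in the image of ×L′ : M_0 → M_1 for each i. Then the 2r−2 linear forms L, L′, ℓ̄_1,…,ℓ̄_{r−2}, ℓ̄′_1,…,ℓ̄′_{r−2} do not span [R]_1; that is, their span is a proper subspace of [R]_1 (so their common zero locus in ℙ^r is nonempty). -/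
open MvPolynomial

/-- **Corollary (the linear forms do not span).**  Let `M` be a finitely generated graded module
over `R = K[x_0,…,x_r]` with initial degree `0`, with no minimal generator in degree `1`
(i.e. `M_1 = R_1·M_0`), and with `dim_K M_1 > 2·dim_K M_0`.  Let `L, L' ∈ [R]_1`, and suppose
`ℓ̄_1,…,ℓ̄_{r-2}, ℓ̄'_1,…,ℓ̄'_{r-2} ∈ [R]_1` are such that the image of `×ℓ̄_i : M_0 → M_1` is
contained in the image of `×L : M_0 → M_1` for each `i`, and the image of `×ℓ̄'_i : M_0 → M_1`
is contained in the image of `×L' : M_0 → M_1` for each `i`.  Then the `2r-2` linear forms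
`L, L', ℓ̄_1,…,ℓ̄_{r-2}, ℓ̄'_1,…,ℓ̄'_{r-2}` do not span `[R]_1`: their span is a proper subspace
of `[R]_1` (so their common zero locus in `ℙ^r` is nonempty). -/
theorem gradedModule_linear_forms_do_not_span
    {K : Type*} [Field K] [IsAlgClosed K] {r : ℕ}
    {M : Type*} [AddCommGroup M] [Module (MvPolynomial (Fin (r + 1)) K) M]
    [Module K M] [IsScalarTower K (MvPolynomial (Fin (r + 1)) K) M]
    [Module.Finite (MvPolynomial (Fin (r + 1)) K) M]
    (𝓜 : ℕ → Submodule K M)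
    (hdecomp : DirectSum.IsInternal 𝓜)
    (hgr : ∀ (f : MvPolynomial (Fin (r + 1)) K) (d t : ℕ), f.IsHomogeneous d →
      ∀ m ∈ 𝓜 t, f • m ∈ 𝓜 (t + d))
    (hinit : 𝓜 0 ≠ ⊥)
    (hgen1 : ∀ m ∈ 𝓜 1, m ∈ Submodule.span K
      {x : M | ∃ f : MvPolynomial (Fin (r + 1)) K, f.IsHomogeneous 1 ∧
        ∃ m₀ ∈ 𝓜 0, x = f • m₀})
    (hdim : 2 * Module.finrank K (𝓜 0) < Module.finrank K (𝓜 1))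
    (L L' : MvPolynomial (Fin (r + 1)) K)
    (hL : L.IsHomogeneous 1) (hL' : L'.IsHomogeneous 1)
    (ℓ ℓ' : Fin (r - 2) → MvPolynomial (Fin (r + 1)) K)
    (hℓ : ∀ i, (ℓ i).IsHomogeneous 1) (hℓ' : ∀ i, (ℓ' i).IsHomogeneous 1)
    (himg : ∀ i, ∀ m ∈ 𝓜 0, ∃ m' ∈ 𝓜 0, ℓ i • m = L • m')
    (himg' : ∀ i, ∀ m ∈ 𝓜 0, ∃ m' ∈ 𝓜 0, ℓ' i • m = L' • m') :
    Submodule.span K ({L, L'} ∪ Set.range ℓ ∪ Set.range ℓ')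
      ≠ homogeneousSubmodule (Fin (r + 1)) K 1 := by
  classical
  intro hspan
  -- projection onto degree zero
  let e := LinearEquiv.ofBijective (DirectSum.coeLinearMap 𝓜) hdecomp
  let p : M →ₗ[K] 𝓜 0 := (DirectSum.component K ℕ (fun i => 𝓜 i) 0).comp e.symm.toLinearMap
  have hes : ∀ t (m : M) (hm : m ∈ 𝓜 t),
      e.symm m = DirectSum.lof K ℕ (fun i => 𝓜 i) t ⟨m, hm⟩ := by
    intro t m hm
    rw [LinearEquiv.symm_apply_eq]
    exact (DirectSum.coeLinearMap_lof 𝓜 t ⟨m, hm⟩).symm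
  have hp0 : ∀ m (hm : m ∈ 𝓜 0), p m = ⟨m, hm⟩ := by
    intro m hm
    change DirectSum.component K ℕ (fun i => 𝓜 i) 0 (e.symm m) = _
    rw [hes 0 m hm, DirectSum.component.lof_self]
  have hpt : ∀ t m, m ∈ 𝓜 (t + 1) → p m = 0 := by
    intro t m hm
    change DirectSum.component K ℕ (fun i => 𝓜 i) 0 (e.symm m) = _
    rw [hes _ m hm, DirectSum.component.of]
    simp
  have hpX : ∀ i (m : M), p ((X i : MvPolynomial (Fin (r + 1)) K) • m) = 0 := by
    intro i m
    have hm : m ∈ ⨆ t, 𝓜 t := by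
      rw [hdecomp.submodule_iSup_eq_top]; trivial
    induction hm using Submodule.iSup_induction' with
    | mem t x hx => exact hpt t _ (hgr _ 1 t (isHomogeneous_X K i) x hx)
    | zero => simp
    | add x y _ _ hx hy => rw [smul_add, map_add, hx, hy, add_zero]
  have hfin : Module.Finite K (𝓜 0) := by
    obtain ⟨s, hs⟩ := (Module.Finite.fg_top : (⊤ : Submodule (MvPolynomial (Fin (r + 1)) K) M).FG)
    have key : ∀ m : M, p m ∈ Submodule.span K (p '' (s : Set M)) := by
      intro m
      have hm : m ∈ Submodule.span (MvPolynomial (Fin (r + 1)) K) (s : Set M) := by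
        rw [hs]; trivial
      induction hm using Submodule.span_induction with
      | mem x hx => exact Submodule.subset_span ⟨x, hx, rfl⟩
      | zero => simp
      | add x y _ _ hx hy => rw [map_add]; exact add_mem hx hy
      | smul f x _ hx =>
        induction f using MvPolynomial.induction_on with
        | C a =>
          have : (C a : MvPolynomial (Fin (r + 1)) K) • x = a • x := algebraMap_smul _ a x
          rw [this, map_smul]
          exact Submodule.smul_mem _ _ hx
        | add f g hf hg => rw [add_smul, map_add]; exact add_mem hf hg
        | mul_X f i _ => rw [mul_comm, mul_smul, hpX]; exact zero_mem _
    refine ⟨⟨s.image p, ?_⟩⟩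
    rw [eq_top_iff]
    rintro ⟨m, hm⟩ -
    rw [Finset.coe_image, ← hp0 m hm]
    exact key m
  let A : MvPolynomial (Fin (r + 1)) K → (M →ₗ[K] M) := fun f =>
    (LinearMap.lsmul (MvPolynomial (Fin (r + 1)) K) M f).restrictScalars K
  let W : Submodule K M := (𝓜 0).map (A L) ⊔ (𝓜 0).map (A L')
  have hW : ∀ f ∈ Submodule.span K ({L, L'} ∪ Set.range ℓ ∪ Set.range ℓ'),
      ∀ m ∈ 𝓜 0, f • m ∈ W := by
    intro f hf m hm
    have h1 : ∀ m ∈ 𝓜 0, L • m ∈ W := fun m hm =>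
      Submodule.mem_sup_left ⟨m, hm, rfl⟩
    have h2 : ∀ m ∈ 𝓜 0, L' • m ∈ W := fun m hm =>
      Submodule.mem_sup_right ⟨m, hm, rfl⟩
    induction hf using Submodule.span_induction with
    | mem x hx =>
      rcases hx with ((rfl | rfl) | ⟨i, rfl⟩) | ⟨i, rfl⟩
      · exact h1 m hm
      · exact h2 m hm
      · obtain ⟨m', hm', h⟩ := himg i m hm
        rw [h]; exact h1 m' hm'
      · obtain ⟨m', hm', h⟩ := himg' i m hm
        rw [h]; exact h2 m' hm'
    | zero => rw [zero_smul]; exact zero_mem _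
    | add x y _ _ hx hy => rw [add_smul]; exact add_mem hx hy
    | smul a x _ hx => rw [smul_assoc]; exact Submodule.smul_mem _ _ hx
  have hle : 𝓜 1 ≤ W := by
    intro m hm
    refine (Submodule.span_le.2 ?_) (hgen1 m hm)
    rintro x ⟨f, hf, m₀, hm₀, rfl⟩
    exact hW f (by rw [hspan]; exact hf) m₀ hm₀
  have f1 : Module.finrank K (𝓜 1) ≤ Module.finrank K W := Submodule.finrank_mono hle
  have f2 : Module.finrank K W ≤ _ := Submodule.finrank_add_le_finrank_add_finrank _ _
  have f3 := Submodule.finrank_map_le (A L) (𝓜 0)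
  have f4 := Submodule.finrank_map_le (A L') (𝓜 0)
  omega
end

section
/- Let K be an algebraically closed field and Z ⊂ ℙ^r a finite reduced set of points whose h-vector has value k in degree n and k−1 in degree n+1, with n ≥ k ≥ 2, and is zero in all degrees ≥ n+2, and such that the linear systems |[J]_n| and |[J]_{n+1}| (J the artinian reduction of I_Z) are basepoint free. Then at least C(k+1,2) + (k+1)(n−k+2) − 3 points of Z lie on a plane (a 2-dimensional linear subspace of ℙ^r). -/
open MvPolynomial

/-- The first difference of the Hilbert function of `R/I`; for the saturated ideal of a finite
set of points this is the `h`-vector, i.e. the Hilbert function of an artinian reduction by a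
general linear form. -/
noncomputable def hvec {K : Type*} [Field K] {σ : Type*} (I : Ideal (MvPolynomial σ K)) : ℕ → ℕ
  | 0 => hilb I 0
  | t + 1 => hilb I (t + 1) - hilb I t

/-- The saturated homogeneous ideal of a (finite) set of points of `ℙ^{m-1}`, the points being
given by (nonzero) representative vectors: a polynomial lies in this ideal iff it vanishes at
every scalar multiple of every representative, i.e. iff all of its homogeneous components vanish
at the corresponding projective points. -/
noncomputable def pointsIdeal {K : Type*} [Field K] {m : ℕ} (Z : Set (Fin m → K)) :
    Ideal (MvPolynomial (Fin m) K) :=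
  ⨅ v ∈ Z, ⨅ c : K, RingHom.ker (eval (c • v))


set_option linter.unusedSectionVars false

section abstractPart
variable {K : Type*} [Field K] [IsAlgClosed K] {E X : Type*} [AddCommGroup E] [Module K E]
  [AddCommGroup X] [Module K X]

lemma ab_bad_finite {A B : Type*} [AddCommGroup A] [Module K A] [AddCommGroup B] [Module K B]
    [FiniteDimensional K A] (f g : A →ₗ[K] B) (hg : ∀ v, g v = 0 → v = 0) :
    {t : K | ¬ ∀ v, f v + t • g v = 0 → v = 0}.Finite := by
  obtain ⟨p, hp⟩ := LinearMap.exists_leftInverse_of_injective g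
    (LinearMap.ker_eq_bot'.2 hg)
  have hfin := Module.End.finite_hasEigenvalue (p ∘ₗ f)
  refine (hfin.image (fun t => -t)).subset ?_
  intro t ht
  simp only [Set.mem_ofPred_eq, not_forall] at ht
  obtain ⟨v, hv, hv0⟩ := ht
  refine ⟨-t, ?_, by simp⟩
  have h1 : p (f v) = (-t) • v := by
    have : f v = (-t) • g v := by
      rw [neg_smul]; exact eq_neg_of_add_eq_zero_left hv
    rw [this, map_smul]
    congr 1
    exact LinearMap.congr_fun hp v
  exact Module.End.hasEigenvalue_of_hasEigenvector (x := v)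
    ⟨Module.End.mem_eigenspace_iff.2 h1, hv0⟩

lemma ab_pencil (W : Submodule K E) [FiniteDimensional K W] (f g : E →ₗ[K] E)
    (hW : W ≠ ⊥) (hg : ∀ w ∈ W, g w = 0 → w = 0) (hfg : ∀ w ∈ W, ∃ w' ∈ W, f w = g w') :
    ∃ c : K, ∃ w ∈ W, w ≠ 0 ∧ f w = c • g w := by
  obtain ⟨p, hp⟩ := LinearMap.exists_leftInverse_of_injective (g ∘ₗ W.subtype)
    (LinearMap.ker_eq_bot'.2 (fun m hm => Subtype.ext (hg m m.2 hm)))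
  have : Nontrivial W := Submodule.nontrivial_iff_ne_bot.2 hW
  obtain ⟨c, hc⟩ := Module.End.exists_eigenvalue (p ∘ₗ f ∘ₗ W.subtype)
  obtain ⟨v, hv⟩ := hc.exists_hasEigenvector
  refine ⟨c, v, v.2, fun h => hv.2 (Subtype.ext h), ?_⟩
  obtain ⟨w', hw', h⟩ := hfg v v.2
  have h1 := hv.apply_eq_smul
  have h2 : p (f v) = (⟨w', hw'⟩ : W) := by
    rw [h]; exact LinearMap.congr_fun hp ⟨w', hw'⟩
  have h3 : (⟨w', hw'⟩ : W) = c • v := by rw [← h2]; exact h1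
  have h4 : w' = c • (v : E) := congrArg Subtype.val h3
  rw [h, h4, map_smul]

variable (act : X →ₗ[K] E →ₗ[K] E)

/-- common eigenvectors -/
def AbPure (w : E) : Prop := w ≠ 0 ∧ ∃ l : X, ∀ x : X, ∃ c : K, act x w = c • act l w

lemma ab_finrank_split {E' : Type*} [AddCommGroup E'] [Module K E'] (f : E →ₗ[K] E') (V : Submodule K E) [FiniteDimensional K V] :
    Module.finrank K (V.map f) + Module.finrank K (V ⊓ LinearMap.ker f : Submodule K E)
      = Module.finrank K V := by
  have h := LinearMap.finrank_range_add_finrank_ker (f ∘ₗ V.subtype)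
  rw [LinearMap.range_comp, Submodule.range_subtype, LinearMap.ker_comp] at h
  rw [← h]; congr 1
  rw [inf_comm]
  have := LinearEquiv.finrank_eq (Submodule.comap_equiv_self_of_inj_of_le
    (f := V.subtype) (p := LinearMap.ker f ⊓ V) V.injective_subtype (by simp))
  rw [← this]
  have h2 : Submodule.comap V.subtype (LinearMap.ker f ⊓ V) = Submodule.comap V.subtype (LinearMap.ker f) := by
    simp [Submodule.comap_inf]
  rw [h2]

variable (D : ℕ → Submodule K E)
  (hcomm : ∀ x y v, act x (act y v) = act y (act x v))
  (hD : ∀ t x v, v ∈ D (t + 1) → act x v ∈ D t)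
  (hS : ∀ t v, v ∈ D (t + 1) → (∀ x, act x v = 0) → v = 0)

include hcomm hD hS

lemma ab_green (s : ℕ) : ∀ (d : ℕ) (V : Submodule K E) [FiniteDimensional K V], V ≤ D d →
    Module.finrank K V = s → s ≤ d → ∃ x, ∀ v ∈ V, act x v = 0 → v = 0 := by
  induction s using Nat.strong_induction_on with
  | _ s ih =>
  intro d V _ hVD hs hsd
  by_cases hV : V = ⊥
  · exact ⟨0, fun v hv _ => by simpa [hV] using hv⟩
  have hspos : 0 < s := by
    rw [← hs]
    have : Nontrivial V := Submodule.nontrivial_iff_ne_bot.2 hV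
    exact Module.finrank_pos
  obtain ⟨e, rfl⟩ : ∃ e, d = e + 1 := ⟨d - 1, by omega⟩
  obtain ⟨v, hv, hv0⟩ := Submodule.exists_mem_ne_zero_of_ne_bot hV
  obtain ⟨x, hx⟩ : ∃ x, act x v ≠ 0 := by
    by_contra h; push Not at h; exact hv0 (hS e v (hVD hv) h)
  have hsplit := ab_finrank_split (act x) V
  have h1 : 0 < Module.finrank K (V.map (act x)) := by
    have : V.map (act x) ≠ ⊥ := fun h => hx (by
      have : act x v ∈ V.map (act x) := Submodule.mem_map_of_mem hv
      simpa [h] using this)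
    have : Nontrivial (V.map (act x)) := Submodule.nontrivial_iff_ne_bot.2 this
    exact Module.finrank_pos
  by_cases h0 : V ⊓ LinearMap.ker (act x) = ⊥
  · refine ⟨x, fun w hw hw0 => ?_⟩
    have : w ∈ V ⊓ LinearMap.ker (act x) := ⟨hw, hw0⟩
    simpa [h0] using this
  have h2 : 0 < Module.finrank K (V ⊓ LinearMap.ker (act x) : Submodule K E) := by
    have : Nontrivial (V ⊓ LinearMap.ker (act x) : Submodule K E) :=
      Submodule.nontrivial_iff_ne_bot.2 h0
    exact Module.finrank_pos
  obtain ⟨y, hy⟩ := ih _ (by omega) (e + 1) (V ⊓ LinearMap.ker (act x)) (inf_le_left.trans hVD) rfl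
    (by omega)
  obtain ⟨z, hz⟩ := ih _ (by omega) e (V.map (act x)) (by
    rintro _ ⟨w, hw, rfl⟩; exact hD _ _ _ (hVD hw)) rfl (by omega)
  have f1 := ab_bad_finite ((act z) ∘ₗ (V ⊓ LinearMap.ker (act x)).subtype)
    ((act y) ∘ₗ (V ⊓ LinearMap.ker (act x)).subtype) (fun v hv => Subtype.ext (hy v v.2 hv))
  have f2 := ab_bad_finite ((act y) ∘ₗ (V.map (act x)).subtype)
    ((act z) ∘ₗ (V.map (act x)).subtype) (fun v hv => Subtype.ext (hz v v.2 hv))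
  have f3 : ({0} ∪ ({t : K | ¬ ∀ v, ((act z) ∘ₗ (V ⊓ LinearMap.ker (act x)).subtype) v + t •
      ((act y) ∘ₗ (V ⊓ LinearMap.ker (act x)).subtype) v = 0 → v = 0} ∪
      (fun t => t⁻¹) '' {t : K | ¬ ∀ v, ((act y) ∘ₗ (V.map (act x)).subtype) v + t •
      ((act z) ∘ₗ (V.map (act x)).subtype) v = 0 → v = 0})).Finite :=
    (Set.finite_singleton _).union (f1.union (f2.image _))
  have : Infinite K := IsAlgClosed.instInfinite
  obtain ⟨t, ht⟩ := f3.exists_notMem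
  simp only [Set.mem_union, Set.mem_singleton_iff, not_or] at ht
  obtain ⟨ht0, ht1, ht2⟩ := ht
  have ht1' : ∀ v ∈ V ⊓ LinearMap.ker (act x), act z v + t • act y v = 0 → v = 0 := by
    by_contra hcon
    apply ht1
    intro hall
    exact hcon (fun v hv h => congrArg Subtype.val (hall ⟨v, hv⟩ h))
  have ht2' : ∀ v ∈ V.map (act x), act y v + t⁻¹ • act z v = 0 → v = 0 := by
    by_contra hcon
    apply ht2
    refine ⟨t⁻¹, ?_, inv_inv t⟩
    intro hall
    exact hcon (fun v hv h => congrArg Subtype.val (hall ⟨v, hv⟩ h))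
  refine ⟨z + t • y, fun w hw hw0 => ?_⟩
  have hw1 : act x w = 0 := by
    apply ht2' _ (Submodule.mem_map_of_mem hw)
    have e1 : act y (act x w) + t⁻¹ • act z (act x w) = t⁻¹ • act x (act (z + t • y) w) := by
      rw [hcomm y, hcomm z]
      simp only [map_add, map_smul, LinearMap.add_apply, LinearMap.smul_apply, smul_add]
      rw [inv_smul_smul₀ ht0, add_comm]
    rw [e1, hw0]; simp
  apply ht1' w ⟨hw, hw1⟩
  simpa using hw0

omit hD hS in
lemma ab_common (s : ℕ) : ∀ (W V : Submodule K E) [FiniteDimensional K W], W ≠ ⊥ →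
    Module.finrank K W = s → ∀ l : X, (∀ v ∈ V, act l v = 0 → v = 0) →
    (∀ w ∈ W, act l w = 0 → w = 0) →
    (∀ w ∈ W, ∀ x, act x w ∈ V) → (∀ v ∈ V, ∃ w ∈ W, v = act l w) →
    ∃ w ∈ W, AbPure act w := by
  induction s using Nat.strong_induction_on with
  | _ s ih =>
  intro W V _ hW hs l hl hlW hWV hVW
  by_cases hall : ∀ w ∈ W, ∀ x, ∃ c : K, act x w = c • act l w
  · obtain ⟨w, hw, hw0⟩ := Submodule.exists_mem_ne_zero_of_ne_bot hW
    exact ⟨w, hw, hw0, l, hall w hw⟩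
  push Not at hall
  obtain ⟨w1, hw1, x, hx⟩ := hall
  obtain ⟨c, w2, hw2, hw20, hc⟩ := ab_pencil W (act x) (act l) hW hlW
    (fun w hw => hVW _ (hWV w hw x))
  set y := x - c • l with hy
  have hyv : ∀ v, act y v = act x v - c • act l v := by intro v; simp [hy]
  set W' := W ⊓ LinearMap.ker (act y) with hW'
  have hlt : W' < W := by
    refine lt_of_le_of_ne inf_le_left (fun h => ?_)
    have : w1 ∈ W' := h ▸ hw1
    have h3 : act y w1 = 0 := this.2
    rw [hyv, sub_eq_zero] at h3
    exact hx c h3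
  have hne : W' ≠ ⊥ := by
    intro h
    have : w2 ∈ W' := ⟨hw2, by
      change act y w2 = 0
      rw [hyv, hc, sub_self]⟩
    rw [h] at this
    exact hw20 (by simpa using this)
  obtain ⟨w, hw, hp⟩ := ih _ (hs ▸ Submodule.finrank_lt_finrank_of_lt hlt) W'
    (V ⊓ LinearMap.ker (act y)) hne rfl l (fun v hv => hl v hv.1) (fun v hv => hlW v hv.1)
    (fun w hw z => ⟨hWV w hw.1 z, by
      change act y (act z w) = 0
      rw [hcomm, show act y w = 0 from hw.2, map_zero]⟩)
    (fun v hv => by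
      obtain ⟨w, hw, rfl⟩ := hVW v hv.1
      refine ⟨w, ⟨hw, ?_⟩, rfl⟩
      change act y w = 0
      apply hl _ (hWV w hw y)
      rw [hcomm]; exact hv.2)
  exact ⟨w, hw.1, hp⟩

lemma ab_growth (d : ℕ) (W V : Submodule K E) [FiniteDimensional K W] [FiniteDimensional K V]
    (hW : W ≠ ⊥) (hWD : W ≤ D (d + 1)) (hVD : V ≤ D d) (hWV : ∀ w ∈ W, ∀ x, act x w ∈ V)
    (hd : Module.finrank K V ≤ d) (hp : ∀ w ∈ W, ¬ AbPure act w) :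
    Module.finrank K W + 1 ≤ Module.finrank K V := by
  by_contra hcon
  obtain ⟨l, hl⟩ := ab_green act D hcomm hD hS _ d V hVD rfl hd
  have hlW : ∀ w ∈ W, act l w = 0 → w = 0 := by
    intro w hw h
    apply hS d w (hWD hw)
    intro x
    apply hl _ (hWV w hw x)
    rw [hcomm, h, map_zero]
  have hle : W.map (act l) ≤ V := by
    rintro _ ⟨w, hw, rfl⟩; exact hWV w hw l
  have hsplit := ab_finrank_split (act l) W
  have hk : W ⊓ LinearMap.ker (act l) = ⊥ := by
    rw [eq_bot_iff]; intro w hw; simpa using hlW w hw.1 hw.2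
  rw [hk, finrank_bot, add_zero] at hsplit
  have heq : W.map (act l) = V := Submodule.eq_of_le_of_finrank_le hle (by omega)
  obtain ⟨w, hw, hpw⟩ := ab_common act hcomm _ W V hW rfl l hl hlW hWV (fun v hv => by
    rw [← heq] at hv
    obtain ⟨w, hw, rfl⟩ := hv
    exact ⟨w, hw, rfl⟩)
  exact hp w hw hpw

omit hD hS in
lemma ab_pure_act_not {V : Submodule K E} (hV : ∀ v ∈ V, ¬ AbPure act v) {t : ℕ}
    (hS' : ∀ v, v ∈ D (t + 1) → (∀ x, act x v = 0) → v = 0)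
    {w : E} (hw : w ∈ D (t + 1)) (hwV : ∀ x, act x w ∈ V) : ¬ AbPure act w := by
  rintro ⟨hw0, l, hl⟩
  refine hV (act l w) (hwV l) ⟨?_, l, fun x => ?_⟩
  · intro h
    apply hw0
    apply hS' w hw
    intro x
    obtain ⟨c, hc⟩ := hl x
    rw [hc, h, smul_zero]
  · obtain ⟨c, hc⟩ := hl x
    exact ⟨c, by rw [hcomm, hc, map_smul]⟩

/-- multiplication by a linear form is zero on `W` or injective on `W` and `V`. -/
lemma ab_zero_or_inj (n : ℕ) (W V : Submodule K E) [FiniteDimensional K W]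
    [FiniteDimensional K V] (hWD : W ≤ D (n + 1)) (hVD : V ≤ D n)
    (hWV : ∀ w ∈ W, ∀ x, act x w ∈ V)
    (hdim : Module.finrank K V = Module.finrank K W + 1) (hn : Module.finrank K V ≤ n)
    (hp : ∀ v ∈ V, ¬ AbPure act v) (g : X) (hg : ∃ w ∈ W, act g w ≠ 0) :
    (∀ v ∈ V, act g v = 0 → v = 0) ∧ (∀ v ∈ W, act g v = 0 → v = 0) := by
  obtain ⟨e, rfl⟩ : ∃ e, n = e + 1 := ⟨n - 1, by omega⟩
  have hpW : ∀ w ∈ W, ¬ AbPure act w := fun w hw =>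
    ab_pure_act_not act D hcomm hp (hS _) (hWD hw) (hWV w hw)
  have sW := ab_finrank_split (act g) W
  have sV := ab_finrank_split (act g) V
  have hgW : W.map (act g) ≠ ⊥ := by
    obtain ⟨w, hw, h⟩ := hg
    intro hb
    have : act g w ∈ W.map (act g) := Submodule.mem_map_of_mem hw
    rw [hb] at this
    exact h (by simpa using this)
  have hgWV : W.map (act g) ≤ V := by
    rintro _ ⟨w, hw, rfl⟩; exact hWV w hw g
  have key : Module.finrank K (V.map (act g)) ≤ e →
      Module.finrank K (W.map (act g)) + 1 ≤ Module.finrank K (V.map (act g)) := by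
    intro hle
    refine ab_growth act D hcomm hD hS e _ _ hgW (hgWV.trans hVD) ?_ ?_ hle
      (fun w hw => hp w (hgWV hw))
    · rintro _ ⟨v, hv, rfl⟩; exact hD _ _ _ (hVD hv)
    · rintro _ ⟨w, hw, rfl⟩ x
      rw [hcomm]
      exact Submodule.mem_map_of_mem (hWV w hw x)
  have hW0 : W ⊓ LinearMap.ker (act g) = ⊥ := by
    by_contra hne
    have := ab_growth act D hcomm hD hS (e + 1) _ (V ⊓ LinearMap.ker (act g)) hne
      (inf_le_left.trans hWD) (inf_le_left.trans hVD)
      (fun w hw x => ⟨hWV w hw.1 x, by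
        change act g (act x w) = 0
        rw [hcomm, show act g w = 0 from hw.2, map_zero]⟩) (by omega) (fun w hw => hpW w hw.1)
    have := key (by omega)
    omega
  rw [hW0, finrank_bot] at sW
  have hV0 : Module.finrank K (V ⊓ LinearMap.ker (act g) : Submodule K E) = 0 := by
    by_cases h : Module.finrank K (V.map (act g)) ≤ e
    · have := key h; omega
    · omega
  have hV0' := Submodule.finrank_eq_zero.1 hV0
  constructor
  · intro v hv h
    have : v ∈ V ⊓ LinearMap.ker (act g) := ⟨hv, h⟩
    simpa [hV0'] using this
  · intro v hv h
    have : v ∈ W ⊓ LinearMap.ker (act g) := ⟨hv, h⟩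
    simpa [hW0] using this

omit hcomm hD hS in
lemma ab_map_inj_finrank (f : E →ₗ[K] E) (W : Submodule K E) [FiniteDimensional K W]
    (h : ∀ w ∈ W, f w = 0 → w = 0) :
    Module.finrank K (W.map f) = Module.finrank K W := by
  have := ab_finrank_split f W
  have h0 : W ⊓ LinearMap.ker f = ⊥ := by
    rw [eq_bot_iff]; intro w hw; simpa using h w hw.1 hw.2
  rwa [h0, finrank_bot, add_zero] at this

/-- three independent linear forms are impossible -/
lemma ab_no_three (n : ℕ) (W V : Submodule K E) [FiniteDimensional K W]
    [FiniteDimensional K V] (hWD : W ≤ D (n + 1)) (hVD : V ≤ D n)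
    (hWV : ∀ w ∈ W, ∀ x, act x w ∈ V)
    (hdim : Module.finrank K V = Module.finrank K W + 1) (hn : Module.finrank K V ≤ n)
    (hW : W ≠ ⊥)
    (hp : ∀ v ∈ V, ¬ AbPure act v) (l m m' : X)
    (hind : ∀ a b c : K, (∀ w ∈ W, act (a • l + b • m + c • m') w = 0) → a = 0 ∧ b = 0 ∧ c = 0) :
    False := by
  have hinj : ∀ a b c : K, ¬ (a = 0 ∧ b = 0 ∧ c = 0) →
      (∀ v ∈ V, act (a • l + b • m + c • m') v = 0 → v = 0) ∧
      (∀ v ∈ W, act (a • l + b • m + c • m') v = 0 → v = 0) := by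
    intro a b c habc
    refine ab_zero_or_inj act D hcomm hD hS n W V hWD hVD hWV hdim hn hp _ ?_
    by_contra hcon
    push Not at hcon
    exact habc (hind a b c hcon)
  have hl := hinj 1 0 0 (by simp)
  have hm := hinj 0 1 0 (by simp)
  simp only [one_smul, zero_smul, add_zero, zero_add] at hl hm
  have hV0 : V ≠ ⊥ := by
    rintro rfl
    rw [finrank_bot] at hdim; omega
  -- no eigenvectors
  have heig : ∀ A : Submodule K E, A ≤ W ∨ A ≤ V → FiniteDimensional K A → A ≠ ⊥ →
      ∃ w ∈ A, ∀ w' ∈ A, act m w ≠ act l w' := by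
    intro A hA hfin hA0
    by_contra hcon
    push Not at hcon
    have hlA : ∀ w ∈ A, act l w = 0 → w = 0 := by
      rcases hA with h | h
      · exact fun w hw => hl.2 w (h hw)
      · exact fun w hw => hl.1 w (h hw)
    obtain ⟨c, w, hw, hw0, hc⟩ := ab_pencil A (act m) (act l) hA0 hlA hcon
    have h2 := hinj (-c) 1 0 (by simp)
    have h3 : act ((-c) • l + (1 : K) • m + (0 : K) • m') w = 0 := by
      simp [hc]
    rcases hA with h | h
    · exact hw0 (h2.2 w (h hw) h3)
    · exact hw0 (h2.1 w (h hw) h3)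
  -- exactness
  have hex : ∀ v ∈ V, ∀ v' ∈ V, act l v = act m v' → ∃ w ∈ W, v = act m w ∧ v' = act l w := by
    intro v hv v' hv' h
    set B := V ⊓ (V.map (act l)).comap (act m) with hB
    have hBV : B < V := by
      refine lt_of_le_of_ne inf_le_left (fun hBe => ?_)
      obtain ⟨w, hw, hw'⟩ := heig V (Or.inr le_rfl) inferInstance hV0
      have : w ∈ B := hBe ▸ hw
      obtain ⟨u, hu, hu'⟩ := this.2
      exact hw' u hu hu'.symm
    have h1 := Submodule.finrank_lt_finrank_of_lt hBV
    have h2 : W.map (act l) ≤ B := by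
      rintro _ ⟨w, hw, rfl⟩
      refine ⟨hWV w hw l, ?_⟩
      change act m (act l w) ∈ V.map (act l)
      rw [hcomm]
      exact Submodule.mem_map_of_mem (hWV w hw m)
    have h3 := ab_map_inj_finrank (act l) W hl.2
    have h4 : W.map (act l) = B := Submodule.eq_of_le_of_finrank_le h2 (by omega)
    have h5 : v' ∈ B := ⟨hv', v, hv, h⟩
    rw [← h4] at h5
    obtain ⟨w, hw, rfl⟩ := h5
    refine ⟨w, hw, ?_, rfl⟩
    rw [hcomm, ← sub_eq_zero, ← map_sub] at h
    exact sub_eq_zero.1 (hl.1 _ (V.sub_mem hv (hWV w hw m)) h)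
  -- descent
  have desc : ∀ s : ℕ, ∀ F : Submodule K E, F ≤ V → Module.finrank K F = s → 2 ≤ s →
      (∀ w ∈ W, act m w ∈ F → act m' w ∈ F) → (∀ w ∈ W, act m w ∈ F → act l w ∈ F) → False := by
    intro s
    induction s using Nat.strong_induction_on with
    | _ s ih =>
    intro F hFV hFs hs hP hQ
    have hFfin : FiniteDimensional K F := Submodule.finiteDimensional_of_le hFV
    set A := W ⊓ F.comap (act m) with hA
    have hAm : Module.finrank K (A.map (act m)) = Module.finrank K A :=
      ab_map_inj_finrank (act m) A (fun w hw => hm.2 w hw.1)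
    have hAl : Module.finrank K (A.map (act l)) = Module.finrank K A :=
      ab_map_inj_finrank (act l) A (fun w hw => hl.2 w hw.1)
    have hWm : Module.finrank K (W.map (act m)) = Module.finrank K W :=
      ab_map_inj_finrank (act m) W hm.2
    have hAeq : A.map (act m) = W.map (act m) ⊓ F := by
      ext v; constructor
      · rintro ⟨w, hw, rfl⟩; exact ⟨Submodule.mem_map_of_mem hw.1, hw.2⟩
      · rintro ⟨⟨w, hw, rfl⟩, hv⟩; exact Submodule.mem_map_of_mem ⟨hw, hv⟩
    have hsup : Module.finrank K (W.map (act m) ⊔ F : Submodule K E) ≤ Module.finrank K V := by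
      apply Submodule.finrank_mono
      refine sup_le ?_ hFV
      rintro _ ⟨w, hw, rfl⟩; exact hWV w hw m
    have hsi := Submodule.finrank_sup_add_finrank_inf_eq (W.map (act m)) F
    rw [← hAeq] at hsi
    have hApos : A ≠ ⊥ := by
      intro h
      have h0 : Module.finrank K A = 0 := by rw [h, finrank_bot]
      omega
    have hF'F : A.map (act l) ≤ F := by
      rintro _ ⟨w, hw, rfl⟩; exact hQ w hw.1 hw.2
    have hlt : A.map (act l) < F := by
      refine lt_of_le_of_ne hF'F (fun h => ?_)
      obtain ⟨w, hw, hw'⟩ := heig A (Or.inl inf_le_left) inferInstance hApos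
      have : act m w ∈ F := hw.2
      rw [← h] at this
      obtain ⟨u, hu, hu'⟩ := this
      exact hw' u hu hu'.symm
    have hltr := Submodule.finrank_lt_finrank_of_lt hlt
    by_cases h3 : 3 ≤ s
    · refine ih (Module.finrank K (A.map (act l))) (by omega) _ (hF'F.trans hFV) rfl (by omega)
        ?_ ?_
      · rintro w hw ⟨w', hw', h⟩
        have h6 : act l (act m' w') = act m (act m' w) := by
          rw [hcomm, h, hcomm]
        obtain ⟨x, hx, hx1, hx2⟩ := hex _ (hWV w' hw'.1 m') _ (hWV w hw m') h6
        rw [hx2]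
        refine Submodule.mem_map_of_mem ⟨hx, ?_⟩
        change act m x ∈ F
        rw [← hx1]
        exact hP w' hw'.1 hw'.2
      · intro w hw h
        exact Submodule.mem_map_of_mem ⟨hw, hF'F h⟩
    · obtain ⟨w, hw, hw0⟩ := Submodule.exists_mem_ne_zero_of_ne_bot hApos
      have hdep : ¬ LinearIndependent K (![act l w, act m w, act m' w] : Fin 3 → E) := by
        intro hli
        have h5 := finrank_span_eq_card hli
        have h6 : Submodule.span K (Set.range (![act l w, act m w, act m' w] : Fin 3 → E)) ≤ F := by
          rw [Submodule.span_le]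
          rintro _ ⟨i, rfl⟩
          fin_cases i
          · exact hQ w hw.1 hw.2
          · exact hw.2
          · exact hP w hw.1 hw.2
        have h7 := Submodule.finrank_mono h6
        rw [h5, Fintype.card_fin] at h7
        omega
      rw [Fintype.not_linearIndependent_iff] at hdep
      obtain ⟨g, hg, i, hi⟩ := hdep
      have h7 : act (g 0 • l + g 1 • m + g 2 • m') w = 0 := by
        rw [← hg, Fin.sum_univ_three]
        simp
      have h8 := (hinj (g 0) (g 1) (g 2) (by
        rintro ⟨h0, h1, h2⟩
        apply hi
        fin_cases i
        · exact h0
        · exact h1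
        · exact h2)).2 w hw.1 h7
      exact hw0 h8
  refine desc _ V le_rfl rfl ?_ (fun w hw _ => hWV w hw m') (fun w hw _ => hWV w hw l)
  have : 0 < Module.finrank K W := by
    have : Nontrivial W := Submodule.nontrivial_iff_ne_bot.2 hW
    exact Module.finrank_pos
  omega

/-- The annihilator of `W` in `X` has codimension at most two. -/
lemma ab_codim (n : ℕ) (W V : Submodule K E) [FiniteDimensional K W]
    [FiniteDimensional K V] [FiniteDimensional K X] (hWD : W ≤ D (n + 1)) (hVD : V ≤ D n)
    (hWV : ∀ w ∈ W, ∀ x, act x w ∈ V)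
    (hdim : Module.finrank K V = Module.finrank K W + 1) (hn : Module.finrank K V ≤ n)
    (hW : W ≠ ⊥)
    (hp : ∀ v ∈ V, ¬ AbPure act v) (N : Submodule K X) (hN : ∀ x, x ∈ N ↔ ∀ w ∈ W, act x w = 0) :
    Module.finrank K X ≤ Module.finrank K N + 2 := by
  by_contra hcon
  have h1 := Submodule.finrank_quotient_add_finrank N
  obtain ⟨f, hf⟩ := exists_linearIndependent_of_le_finrank
    (show 3 ≤ Module.finrank K (X ⧸ N) by omega)
  obtain ⟨l, hl⟩ := N.mkQ_surjective (f 0)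
  obtain ⟨m, hm⟩ := N.mkQ_surjective (f 1)
  obtain ⟨m', hm'⟩ := N.mkQ_surjective (f 2)
  refine ab_no_three act D hcomm hD hS n W V hWD hVD hWV hdim hn hW hp l m m' ?_
  intro a b c h
  rw [← hN] at h
  have h2 : N.mkQ (a • l + b • m + c • m') = 0 := (Submodule.Quotient.mk_eq_zero N).2 h
  rw [map_add, map_add, map_smul, map_smul, map_smul, hl, hm, hm'] at h2
  rw [Fintype.linearIndependent_iff] at hf
  have h3 := hf ![a, b, c] (by simpa [Fin.sum_univ_three] using h2)
  exact ⟨h3 0, h3 1, h3 2⟩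

omit [IsAlgClosed K] hcomm hD hS in
lemma ab_mem_SS {A : Submodule K E} {w : E} (hw : w ∈ A) (x : X) :
    act x w ∈ Submodule.map₂ act ⊤ A := Submodule.apply_mem_map₂ act trivial hw

omit hcomm hD hS in
lemma ab_SS_fin (A : Submodule K E) [FiniteDimensional K A] [FiniteDimensional K X] :
    FiniteDimensional K (Submodule.map₂ act ⊤ A) :=
  Module.Finite.iff_fg.2 (Submodule.FG.map₂ act (Module.finite_def.1 inferInstance)
    (Module.Finite.iff_fg.1 inferInstance))

omit [IsAlgClosed K] hcomm hS in
lemma ab_SS_le (t : ℕ) {A : Submodule K E} (hA : A ≤ D (t + 1)) :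
    Submodule.map₂ act ⊤ A ≤ D t :=
  Submodule.map₂_le.2 fun x _ v hv => hD t x v (hA hv)

lemma ab_SS_min (t : ℕ) (A : Submodule K E) [FiniteDimensional K A] [FiniteDimensional K X]
    (hA : A ≤ D (t + 1)) :
    min (Module.finrank K A) (t + 1) ≤ Module.finrank K (Submodule.map₂ act ⊤ A) := by
  obtain ⟨f, hfi⟩ := exists_linearIndependent_of_le_finrank
    (min_le_left (Module.finrank K A) (t + 1))
  have hfi' : LinearIndependent K (fun i => (f i : E)) := hfi.map' A.subtype A.ker_subtype
  set B' := Submodule.span K (Set.range (fun i => (f i : E))) with hB'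
  have hB'A : B' ≤ A := by
    rw [hB', Submodule.span_le]
    rintro _ ⟨i, rfl⟩
    exact (f i).2
  have hf : Module.finrank K B' = min (Module.finrank K A) (t + 1) := by
    rw [hB', finrank_span_eq_card hfi', Fintype.card_fin]
  have : FiniteDimensional K B' := Submodule.finiteDimensional_of_le hB'A
  have := ab_SS_fin act A
  obtain ⟨x, hx⟩ := ab_green act D hcomm hD hS _ (t + 1) B' (hB'A.trans hA) hf (min_le_right _ _)
  rw [← hf, ← ab_map_inj_finrank (act x) B' hx]
  apply Submodule.finrank_mono
  rintro _ ⟨w, hw, rfl⟩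
  exact ab_mem_SS act (hB'A hw) x

end abstractPart

section concretePart
variable {K : Type*} [Field K] {m : ℕ}

/-- linear form with given coefficients -/
noncomputable def lin : (Fin m → K) →ₗ[K] MvPolynomial (Fin m) K :=
  Fintype.linearCombination K (fun i => (X i : MvPolynomial (Fin m) K))

lemma lin_apply (x : Fin m → K) : lin x = ∑ i, x i • (X i : MvPolynomial (Fin m) K) := by
  simp [lin, Fintype.linearCombination_apply]

lemma lin_single (i : Fin m) : lin (Pi.single i (1 : K)) = X i := by
  simp [lin]

lemma eval_lin (x z : Fin m → K) : eval z (lin x) = ∑ i, x i * z i := by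
  simp [lin_apply, smul_eval]

lemma lin_hom (x : Fin m → K) : (lin x).IsHomogeneous 1 := by
  rw [lin_apply]
  apply IsHomogeneous.sum
  intro i _
  rw [smul_eq_C_mul]
  simpa using (isHomogeneous_C (Fin m) (x i)).mul (isHomogeneous_X K i)

lemma lin_inj : Function.Injective (lin : (Fin m → K) →ₗ[K] MvPolynomial (Fin m) K) := by
  rw [← LinearMap.ker_eq_bot, LinearMap.ker_eq_bot']
  intro x hx
  ext i
  have := congrArg (eval (Pi.single i (1 : K))) hx
  simpa [eval_lin, Pi.single_apply] using this

lemma exists_lin {L : MvPolynomial (Fin m) K} (hL : L.IsHomogeneous 1) : ∃ a, L = lin a := by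
  have : L ∈ homogeneousSubmodule (Fin m) K 1 := hL
  rw [homogeneousSubmodule_one_eq_span_X] at this
  rw [Submodule.mem_span_range_iff_exists_fun] at this
  obtain ⟨c, hc⟩ := this
  exact ⟨c, by rw [lin_apply, hc]⟩

/-- action of linear forms on functionals -/
noncomputable def actD : (Fin m → K) →ₗ[K] (MvPolynomial (Fin m) K →ₗ[K] K) →ₗ[K]
    (MvPolynomial (Fin m) K →ₗ[K] K) :=
  LinearMap.mk₂ K (fun x φ => φ ∘ₗ LinearMap.mulLeft K (lin x))
    (fun x y φ => by ext; simp [add_mul])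
    (fun c x φ => by ext; simp)
    (fun x φ ψ => by ext; simp)
    (fun c x φ => by ext; simp)

@[simp] lemma actD_apply (x : Fin m → K) (φ : MvPolynomial (Fin m) K →ₗ[K] K)
    (f : MvPolynomial (Fin m) K) : actD x φ f = φ (lin x * f) := by
  simp [actD]

/-- functionals of degree `t` -/
def DD (K : Type*) [Field K] (m : ℕ) (t : ℕ) : Submodule K (MvPolynomial (Fin m) K →ₗ[K] K) where
  carrier := {φ | ∀ s, s ≠ t → ∀ f : MvPolynomial (Fin m) K, f.IsHomogeneous s → φ f = 0}
  zero_mem' := by intro s _ f _; rfl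
  add_mem' := by
    intro a b ha hb s hs f hf
    simp [ha s hs f hf, hb s hs f hf]
  smul_mem' := by
    intro c a ha s hs f hf
    simp [ha s hs f hf]

lemma mem_DD {t : ℕ} {φ : MvPolynomial (Fin m) K →ₗ[K] K} : φ ∈ DD K m t ↔
    ∀ s, s ≠ t → ∀ f : MvPolynomial (Fin m) K, f.IsHomogeneous s → φ f = 0 := Iff.rfl

lemma actD_comm (x y : Fin m → K) (v : MvPolynomial (Fin m) K →ₗ[K] K) :
    actD x (actD y v) = actD y (actD x v) := by
  apply LinearMap.ext
  intro f
  simp only [actD_apply]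
  congr 1; ring

lemma actD_DD (t : ℕ) (x : Fin m → K) (v : MvPolynomial (Fin m) K →ₗ[K] K)
    (hv : v ∈ DD K m (t + 1)) : actD x v ∈ DD K m t := by
  intro s hs f hf
  rw [actD_apply]
  exact hv (1 + s) (by omega) _ ((lin_hom x).mul hf)

lemma monomial_succ {α : Fin m →₀ ℕ} (h : α ≠ 0) : ∃ i β, α = Finsupp.single i 1 + β := by
  obtain ⟨i, hi⟩ := Finsupp.ne_iff.1 h
  refine ⟨i, α - Finsupp.single i 1, ?_⟩
  rw [add_tsub_cancel_of_le]
  rw [Finsupp.single_le_iff]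
  simp at hi
  omega

lemma actD_socle (t : ℕ) (v : MvPolynomial (Fin m) K →ₗ[K] K)
    (hv : v ∈ DD K m (t + 1)) (h : ∀ x, actD x v = 0) : v = 0 := by
  refine (MvPolynomial.basisMonomials (Fin m) K).ext fun α => ?_
  rw [MvPolynomial.coe_basisMonomials]
  change v (monomial α 1) = 0
  by_cases h0 : α = 0
  · subst h0
    exact hv 0 (by omega) _ (isHomogeneous_one _ _)
  · obtain ⟨i, β, rfl⟩ := monomial_succ h0
    have := LinearMap.congr_fun (h (Pi.single i 1)) (monomial β 1)
    rw [actD_apply, lin_single] at this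
    rw [show (monomial (Finsupp.single i 1 + β) (1 : K)) = X i * monomial β 1 by
      rw [X, monomial_mul, one_mul]]
    exact this

lemma hc_mul (t : ℕ) (x : Fin m → K) (f : MvPolynomial (Fin m) K) :
    homogeneousComponent (t + 1) (lin x * f) = lin x * homogeneousComponent t f := by
  conv_lhs => rw [← sum_homogeneousComponent f]
  rw [Finset.mul_sum, map_sum]
  have : ∀ i, homogeneousComponent (t + 1) (lin x * homogeneousComponent i f)
      = if i = t then lin x * homogeneousComponent t f else 0 := by
    intro i
    rw [homogeneousComponent_of_mem (n := 1 + i)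
      ((lin_hom x).mul (homogeneousComponent_isHomogeneous i f))]
    by_cases h : i = t
    · subst h; simp [add_comm]
    · rw [if_neg (by omega), if_neg h]
  simp only [this]
  rw [Finset.sum_ite_eq']
  split_ifs with h
  · rfl
  · rw [homogeneousComponent_eq_zero, mul_zero]
    simpa using h

/-- a pure functional is evaluation at a point -/
lemma pure_eval (φ : MvPolynomial (Fin m) K →ₗ[K] K) (l p : Fin m → K)
    (h : ∀ i, actD (Pi.single i 1) φ = p i • actD l φ) (t : ℕ) (f : MvPolynomial (Fin m) K)
    (hf : f.IsHomogeneous t) (g : MvPolynomial (Fin m) K) :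
    φ (f * g) = eval p f * φ (lin l ^ t * g) := by
  have hmon : ∀ t (α : Fin m →₀ ℕ), α.degree = t → ∀ g, φ (monomial α 1 * g) =
      eval p (monomial α 1) * φ (lin l ^ t * g) := by
    intro t
    induction t with
    | zero =>
      intro α hα g
      have : α = 0 := (Finsupp.degree_eq_zero_iff α).1 hα
      subst this
      simp
    | succ t ih =>
      intro α hα g
      have h0 : α ≠ 0 := by rintro rfl; simp at hα
      obtain ⟨i, β, rfl⟩ := monomial_succ h0
      have hβ : β.degree = t := by
        rw [map_add, Finsupp.degree_single] at hα; omega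
      have e : (monomial (Finsupp.single i 1 + β) (1 : K)) = X i * monomial β 1 := by
        rw [X, monomial_mul, one_mul]
      rw [e, mul_assoc]
      have h1 := LinearMap.congr_fun (h i) (monomial β 1 * g)
      rw [LinearMap.smul_apply, actD_apply, actD_apply, lin_single] at h1
      rw [h1, show lin l * (monomial β 1 * g) = monomial β 1 * (lin l * g) by ring, ih β hβ,
        (eval p).map_mul, eval_X, smul_eq_mul, ← mul_assoc (lin l ^ t), ← pow_succ, mul_assoc]
  rw [f.as_sum, Finset.sum_mul, map_sum, map_sum, Finset.sum_mul]
  apply Finset.sum_congr rfl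
  intro α hα
  have hdeg : α.degree = t := by
    have := hf (mem_support_iff.1 hα)
    rw [Finsupp.degree_eq_weight_one]; exact this
  have e : monomial α (coeff α f) = coeff α f • monomial α (1 : K) := by
    rw [smul_monomial, smul_eq_mul, mul_one]
  rw [e, smul_mul_assoc, map_smul, hmon t α hdeg, smul_eval, smul_eq_mul, mul_assoc]

end concretePart

section pointsPart
variable {K : Type*} [Field K] {m : ℕ} (Z : Finset (Fin m → K))

/-- multiplication of functions on `Z` by linear forms -/
noncomputable def mulZ : (Fin m → K) →ₗ[K] (Z → K) →ₗ[K] (Z → K) :=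
  LinearMap.mk₂ K (fun x u z => eval z.1 (lin x) * u z)
    (fun x y u => by ext; simp [add_mul])
    (fun c x u => by ext; simp [smul_eval, mul_assoc])
    (fun x u v => by ext; simp [mul_add])
    (fun c x u => by ext; simp [mul_left_comm])

@[simp] lemma mulZ_apply (x : Fin m → K) (u : Z → K) (z : Z) :
    mulZ Z x u z = eval z.1 (lin x) * u z := by
  simp [mulZ]

/-- relations among the evaluations in degree `t - 1` -/
def NN (t : ℕ) : Submodule K (Z → K) where
  carrier := {u | ∀ j, j + 1 = t → ∀ f : MvPolynomial (Fin m) K, f.IsHomogeneous j →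
    ∑ z, u z * eval z.1 f = 0}
  zero_mem' := by intro j _ f _; simp
  add_mem' := by
    intro a b ha hb j hj f hf
    have h1 := ha j hj f hf
    have h2 := hb j hj f hf
    simp only [Pi.add_apply, add_mul, Finset.sum_add_distrib]
    rw [h1, h2, add_zero]
  smul_mem' := by
    intro c a ha j hj f hf
    simp only [Pi.smul_apply, smul_eq_mul, mul_assoc]
    rw [← Finset.mul_sum, ha j hj f hf, mul_zero]

lemma mem_NN_succ {t : ℕ} {u : Z → K} : u ∈ NN Z (t + 1) ↔
    ∀ f : MvPolynomial (Fin m) K, f.IsHomogeneous t → ∑ z, u z * eval z.1 f = 0 :=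
  ⟨fun h => h t rfl, fun h j hj f hf => h f (by obtain rfl : j = t := by omega
                                                exact hf)⟩

lemma mulZ_NN (t : ℕ) (x : Fin m → K) (u : Z → K) (hu : u ∈ NN Z (t + 1)) :
    mulZ Z x u ∈ NN Z t := by
  intro j hj f hf
  rw [mem_NN_succ] at hu
  have := hu (lin x * f) (by
    have := (lin_hom x).mul hf
    rwa [show 1 + j = t by omega] at this)
  rw [← this]
  apply Finset.sum_congr rfl
  intro z _
  simp; ring

/-- the functional attached to a function on `Z` -/
noncomputable def theta (a : Fin m → K) (t : ℕ) :
    (Z → K) →ₗ[K] (MvPolynomial (Fin m) K →ₗ[K] K) :=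
  LinearMap.mk₂ K (fun u f => ∑ z, u z * (eval z.1 (lin a))⁻¹ *
      eval z.1 (homogeneousComponent t f))
    (fun u v f => by simp [add_mul, Finset.sum_add_distrib])
    (fun c u f => by simp [Finset.mul_sum, mul_assoc])
    (fun u f g => by simp [mul_add, Finset.sum_add_distrib])
    (fun c u f => by
      simp only [map_smul, smul_eval, smul_eq_mul, Finset.mul_sum]
      apply Finset.sum_congr rfl; intro z _; ring)

lemma theta_apply (a : Fin m → K) (t : ℕ) (u : Z → K) (f : MvPolynomial (Fin m) K) :
    theta Z a t u f = ∑ z, u z * (eval z.1 (lin a))⁻¹ *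
      eval z.1 (homogeneousComponent t f) := by simp [theta]

lemma theta_DD (a : Fin m → K) (t : ℕ) (u : Z → K) : theta Z a t u ∈ DD K m t := by
  intro s hs f hf
  rw [theta_apply]
  apply Finset.sum_eq_zero
  intro z _
  rw [homogeneousComponent_of_mem (n := s) hf, if_neg (by omega)]
  simp

lemma theta_act (a : Fin m → K) (t : ℕ) (x : Fin m → K) (u : Z → K) :
    theta Z a t (mulZ Z x u) = actD x (theta Z a (t + 1) u) := by
  apply LinearMap.ext; intro f
  rw [actD_apply, theta_apply, theta_apply]
  apply Finset.sum_congr rfl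
  intro z _
  rw [hc_mul]; simp; ring

variable {Z} {a : Fin m → K} (ha : ∀ v ∈ Z, eval v (lin a) ≠ 0)

include ha

lemma mulZ_inj (u : Z → K) (h : mulZ Z a u = 0) : u = 0 := by
  ext z
  have := congrFun h z
  simpa [ha z.1 z.2] using this

lemma theta_mul_zero (t : ℕ) (u : Z → K) (hu : u ∈ NN Z (t + 1)) :
    theta Z a t (mulZ Z a u) = 0 := by
  apply LinearMap.ext; intro f
  rw [theta_apply]
  rw [mem_NN_succ] at hu
  simp only [LinearMap.zero_apply]
  rw [← hu _ (homogeneousComponent_isHomogeneous t f)]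
  apply Finset.sum_congr rfl
  intro z _
  have := ha z.1 z.2
  rw [mulZ_apply]; field_simp

lemma theta_ker (t : ℕ) (u : Z → K) (hu : theta Z a t u = 0) :
    ∃ v ∈ NN Z (t + 1), u = mulZ Z a v := by
  refine ⟨fun z => u z * (eval z.1 (lin a))⁻¹, ?_, ?_⟩
  · rw [mem_NN_succ]
    intro f hf
    have := LinearMap.congr_fun hu f
    rw [theta_apply, homogeneousComponent_eq_self hf] at this
    exact this
  · ext z
    have := ha z.1 z.2
    rw [mulZ_apply]; field_simp

lemma act_theta (t : ℕ) (u : Z → K) (hu : u ∈ NN Z (t + 1)) :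
    actD a (theta Z a (t + 1) u) = 0 := by
  rw [← theta_act, theta_mul_zero ha t u hu]

omit ha in
lemma theta_ideal (t : ℕ) (u : Z → K) (f : MvPolynomial (Fin m) K) (hf : f.IsHomogeneous t)
    (hI : f ∈ pointsIdeal (↑Z : Set (Fin m → K))) : theta Z a t u f = 0 := by
  rw [theta_apply]
  apply Finset.sum_eq_zero
  intro z _
  rw [homogeneousComponent_eq_self hf]
  simp only [pointsIdeal, Submodule.mem_iInf] at hI
  have := hI z.1 z.2 1
  rw [one_smul, RingHom.mem_ker] at this
  rw [this, mul_zero]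

/-- `theta` on `NN` : the dimension count -/
lemma finrank_theta (t : ℕ) : Module.finrank K ((NN Z t).map (theta Z a t)) +
    Module.finrank K (NN Z (t + 1)) = Module.finrank K (NN Z t) := by
  have h := LinearMap.finrank_range_add_finrank_ker (theta Z a t ∘ₗ (NN Z t).subtype)
  rw [LinearMap.range_comp, Submodule.range_subtype] at h
  rw [← h]
  congr 1
  have hmap : (LinearMap.ker (theta Z a t ∘ₗ (NN Z t).subtype)).map (NN Z t).subtype
      = (NN Z (t + 1)).map (mulZ Z a) := by
    ext u; constructor
    · rintro ⟨v, hv, rfl⟩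
      obtain ⟨w, hw, h⟩ := theta_ker ha t v hv
      exact ⟨w, hw, h.symm⟩
    · rintro ⟨v, hv, rfl⟩
      exact ⟨⟨mulZ Z a v, mulZ_NN Z t a v hv⟩, theta_mul_zero ha t v hv, rfl⟩
  have h1 := (Submodule.equivMapOfInjective (NN Z t).subtype (NN Z t).injective_subtype
    (LinearMap.ker (theta Z a t ∘ₗ (NN Z t).subtype))).finrank_eq
  have h2 := (Submodule.equivMapOfInjective (mulZ Z a)
    (LinearMap.ker_eq_bot.1 (LinearMap.ker_eq_bot'.2 (mulZ_inj ha))) (NN Z (t + 1))).finrank_eq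
  rw [h1, hmap, ← h2]

omit ha

/-- evaluation at the points -/
noncomputable def evZ (Z : Finset (Fin m → K)) : MvPolynomial (Fin m) K →ₗ[K] (Z → K) :=
  LinearMap.pi (fun z => (aeval z.1 : MvPolynomial (Fin m) K →ₐ[K] K).toLinearMap)

lemma evZ_apply (f : MvPolynomial (Fin m) K) (z : Z) : evZ Z f z = eval z.1 f := by
  simp [evZ, aeval_eq_eval]

lemma mem_pointsIdeal {t : ℕ} {f : MvPolynomial (Fin m) K} (hf : f.IsHomogeneous t) :
    f ∈ pointsIdeal (↑Z : Set (Fin m → K)) ↔ evZ Z f = 0 := by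
  simp only [pointsIdeal, Submodule.mem_iInf, RingHom.mem_ker]
  constructor
  · intro h; ext z
    have := h z.1 z.2 1
    rw [evZ_apply]; simpa using this
  · intro h v hv c
    have := congrFun h ⟨v, hv⟩
    rw [evZ_apply] at this
    have h3 : eval (c • v) f = c ^ t * eval v f := by
      rw [eval_eq, eval_eq, Finset.mul_sum]
      apply Finset.sum_congr rfl
      intro d hd
      have hdeg : ∑ i ∈ d.support, d i = t := by
        have := hf (mem_support_iff.1 hd)
        rw [← this]
        simp [Finsupp.weight_apply, Finsupp.sum]
      rw [← hdeg, ← Finset.prod_pow_eq_pow_sum]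
      simp only [Pi.smul_apply, smul_eq_mul, mul_pow, Finset.prod_mul_distrib]
      ring
    rw [h3]
    simp at this
    rw [this, mul_zero]

lemma hilb_eq (t : ℕ) : hilb (pointsIdeal (↑Z : Set (Fin m → K))) t =
    Module.finrank K ((homogeneousSubmodule (Fin m) K t).map (evZ Z)) := by
  have : Module.Finite K (homogeneousSubmodule (Fin m) K t) :=
    Module.Finite.iff_fg.2 (homogeneousSubmodule_fg (Fin m) K t)
  unfold hilb
  set H := homogeneousSubmodule (Fin m) K t
  have h1 := LinearMap.finrank_range_add_finrank_ker
    ((Ideal.Quotient.mkₐ K (pointsIdeal (↑Z : Set (Fin m → K)))).toLinearMap ∘ₗ H.subtype)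
  have h2 := LinearMap.finrank_range_add_finrank_ker (evZ Z ∘ₗ H.subtype)
  rw [LinearMap.range_comp, Submodule.range_subtype] at h1 h2
  have h3 : LinearMap.ker ((Ideal.Quotient.mkₐ K
      (pointsIdeal (↑Z : Set (Fin m → K)))).toLinearMap ∘ₗ H.subtype)
      = LinearMap.ker (evZ Z ∘ₗ H.subtype) := by
    ext f
    simp only [LinearMap.mem_ker, LinearMap.comp_apply, Submodule.subtype_apply,
      AlgHom.toLinearMap_apply, Ideal.Quotient.mkₐ_eq_mk]
    rw [Ideal.Quotient.eq_zero_iff_mem]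
    exact mem_pointsIdeal f.2
  rw [h3] at h1
  omega

lemma finrank_NN (t : ℕ) : hilb (pointsIdeal (↑Z : Set (Fin m → K))) t +
    Module.finrank K (NN Z (t + 1)) = Z.card := by
  classical
  rw [hilb_eq]
  set H := (homogeneousSubmodule (Fin m) K t).map (evZ Z) with hH
  have h1 := Subspace.finrank_add_finrank_dualAnnihilator_eq H
  rw [Module.finrank_fintype_fun_eq_card, Fintype.card_coe] at h1
  rw [← h1]; congr 1
  have h2 : (NN Z (t + 1)).map ((dotProductEquiv K Z).toLinearMap) = H.dualAnnihilator := by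
    ext φ
    rw [Submodule.mem_dualAnnihilator]
    constructor
    · rintro ⟨u, hu, rfl⟩ w hw
      obtain ⟨f, hf, rfl⟩ := hw
      have := (mem_NN_succ Z).1 hu f hf
      simpa [dotProduct, evZ_apply] using this
    · intro h
      obtain ⟨u, rfl⟩ := (dotProductEquiv K Z).surjective φ
      refine ⟨u, ?_, rfl⟩
      refine (mem_NN_succ Z).2 fun f hf => ?_
      have := h (evZ Z f) ⟨f, hf, rfl⟩
      simpa [dotProduct, evZ_apply] using this
  rw [← h2]
  exact (LinearEquiv.finrank_map_eq (dotProductEquiv K Z) (NN Z (t + 1))).symm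

lemma NN_large (hZ0 : ∀ v ∈ Z, v ≠ (0 : Fin m → K))
    (hZdist : ∀ v ∈ Z, ∀ w ∈ Z, v ≠ w → ∀ c : K, w ≠ c • v) :
    NN Z (Z.card - 1 + 1) = ⊥ := by
  classical
  rw [eq_bot_iff]
  intro u hu
  rw [mem_NN_succ] at hu
  have hsep : ∀ w ∈ Z, ∀ z ∈ Z, w ≠ z → ∃ x : Fin m → K, eval w (lin x) = 0 ∧ eval z (lin x) ≠ 0 := by
    intro w hw z hz hwz
    by_contra hcon
    push Not at hcon
    obtain ⟨j, hj⟩ := Function.ne_iff.1 (hZ0 w hw)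
    simp only [Pi.zero_apply] at hj
    apply hZdist w hw z hz hwz (z j / w j)
    ext i
    have := hcon (w j • Pi.single i 1 - w i • Pi.single j 1) (by
      simp only [map_sub, map_smul, lin_single, smul_eval, eval_X]; ring)
    simp only [map_sub, map_smul, lin_single, smul_eval, eval_X] at this
    simp only [Pi.smul_apply, smul_eq_mul]
    field_simp
    linear_combination this
  choose! x hx using hsep
  change u = 0
  ext z
  have h1 := hu (∏ w ∈ Z.erase z.1, lin (x w z.1)) (by
    have := IsHomogeneous.prod (Z.erase z.1) (fun w => lin (x w z.1)) (fun _ => 1)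
      (fun w _ => lin_hom _)
    simpa [Finset.card_erase_of_mem z.2] using this)
  rw [Finset.sum_eq_single z] at h1
  · rw [map_prod] at h1
    rcases mul_eq_zero.1 h1 with h | h
    · exact h
    · exfalso
      rw [Finset.prod_eq_zero_iff] at h
      obtain ⟨w, hw, h⟩ := h
      rw [Finset.mem_erase] at hw
      exact (hx w hw.2 z.1 z.2 hw.1).2 h
  · intro w _ hwz
    rw [map_prod, Finset.prod_eq_zero (i := w.1), mul_zero]
    · exact Finset.mem_erase.2 ⟨fun h => hwz (Subtype.ext h), w.2⟩
    · exact (hx w.1 w.2 z.1 z.2 (fun h => hwz (Subtype.ext h))).1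
  · simp

end pointsPart

section finalPart
variable {K : Type*} [Field K] {m : ℕ} {Z : Finset (Fin m → K)} {a : Fin m → K}

lemma NN_anti (ha : ∀ v ∈ Z, eval v (lin a) ≠ 0) (t : ℕ) :
    Module.finrank K (NN Z (t + 1)) ≤ Module.finrank K (NN Z t) := by
  have := finrank_theta ha t
  omega

lemma NN_dims (ha : ∀ v ∈ Z, eval v (lin a) ≠ 0)
    (hZ0 : ∀ v ∈ Z, v ≠ (0 : Fin m → K))
    (hZdist : ∀ v ∈ Z, ∀ w ∈ Z, v ≠ w → ∀ c : K, w ≠ c • v) {n k : ℕ}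
    (hk : 2 ≤ k) (hkn : k ≤ n)
    (hhn : hvec (pointsIdeal (↑Z : Set (Fin m → K))) n = k)
    (hhn1 : hvec (pointsIdeal (↑Z : Set (Fin m → K))) (n + 1) + 1 = k)
    (hhtail : ∀ t, n + 2 ≤ t → hvec (pointsIdeal (↑Z : Set (Fin m → K))) t = 0) :
    NN Z (n + 2) = ⊥ ∧ Module.finrank K (NN Z (n + 1)) + 1 = k ∧
      Module.finrank K (NN Z n) + 1 = 2 * k := by
  have hup : ∀ s, Module.finrank K (NN Z (n + 2)) ≤ Module.finrank K (NN Z (n + 2 + s)) := by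
    intro s
    induction s with
    | zero => exact le_rfl
    | succ s ih =>
      refine ih.trans ?_
      have h1 := hhtail (n + 1 + s + 1) (by omega)
      have h2 := finrank_NN (Z := Z) (n + 1 + s)
      have h3 := finrank_NN (Z := Z) (n + 1 + s + 1)
      rw [show n + 2 + s = n + 1 + s + 1 by ring, show n + 2 + (s + 1) = n + 1 + s + 1 + 1 by ring]
      simp only [hvec] at h1
      omega
  have hdown : ∀ t s, Module.finrank K (NN Z (t + s)) ≤ Module.finrank K (NN Z t) := by
    intro t s
    induction s with
    | zero => exact le_rfl
    | succ s ih => exact (NN_anti ha (t + s)).trans ih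
  have h0 : Module.finrank K (NN Z (n + 2)) = 0 := by
    have h1 := hup (Z.card - 1 + 1)
    have h2 := hdown (Z.card - 1 + 1) (n + 2)
    rw [add_comm] at h2
    rw [NN_large hZ0 hZdist, finrank_bot] at h2
    omega
  refine ⟨Submodule.finrank_eq_zero.1 h0, ?_⟩
  obtain ⟨e, rfl⟩ : ∃ e, n = e + 1 := ⟨n - 1, by omega⟩
  have h1 := finrank_NN (Z := Z) e
  have h2 := finrank_NN (Z := Z) (e + 1)
  have h3 := finrank_NN (Z := Z) (e + 1 + 1)
  simp only [hvec] at hhn hhn1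
  rw [show e + 1 + 1 + 1 = e + 1 + 2 by ring] at h3
  constructor <;> omega

lemma hom_zero {t : ℕ} {φ : MvPolynomial (Fin m) K →ₗ[K] K} (hφ : φ ∈ DD K m t)
    (h : ∀ f : MvPolynomial (Fin m) K, f.IsHomogeneous t → φ f = 0) : φ = 0 := by
  apply LinearMap.ext; intro f
  conv_lhs => rw [← sum_homogeneousComponent f]
  rw [map_sum, LinearMap.zero_apply]
  apply Finset.sum_eq_zero
  intro s _
  by_cases hs : s = t
  · subst hs; exact h _ (homogeneousComponent_isHomogeneous _ _)
  · exact hφ s hs _ (homogeneousComponent_isHomogeneous _ _)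

lemma pow_mem_of_hilb {I : Ideal (MvPolynomial (Fin m) K)} {t : ℕ} (h : hilb I t = 0)
    (f : MvPolynomial (Fin m) K) (hf : f.IsHomogeneous t) : f ∈ I := by
  have : Module.Finite K (homogeneousSubmodule (Fin m) K t) :=
    Module.Finite.iff_fg.2 (homogeneousSubmodule_fg (Fin m) K t)
  unfold hilb at h
  have h2 := Submodule.finrank_eq_zero.1 h
  have h3 : (Ideal.Quotient.mkₐ K I).toLinearMap f ∈
      (homogeneousSubmodule (Fin m) K t).map (Ideal.Quotient.mkₐ K I).toLinearMap := ⟨f, hf, rfl⟩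
  rw [h2, Submodule.mem_bot] at h3
  exact Ideal.Quotient.eq_zero_iff_mem.1 h3

lemma no_pure_s15 (ha : ∀ v ∈ Z, eval v (lin a) ≠ 0) {n : ℕ} (hn : 1 ≤ n)
    (hb : ∃ N : ℕ, ∀ t, N ≤ t → hilb (compIdeal (pointsIdeal (↑Z : Set (Fin m → K))) n ⊔
      Ideal.span {lin a}) t = 0) :
    ∀ φ ∈ (NN Z n).map (theta Z a n), ¬ AbPure actD φ := by
  rintro _ ⟨u, hu, rfl⟩ ⟨h0, l, hl⟩
  obtain ⟨e, rfl⟩ : ∃ e, n = e + 1 := ⟨n - 1, by omega⟩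
  set φ := theta Z a (e + 1) u with hφ
  have hDD : φ ∈ DD K m (e + 1) := theta_DD Z a _ u
  choose c hc using hl
  set p : Fin m → K := fun i => c (Pi.single i 1) with hp
  have hpe := pure_eval φ l p (fun i => hc _)
  have hC : φ (lin l ^ (e + 1)) ≠ 0 := by
    intro hC
    apply h0
    apply hom_zero hDD
    intro f hf
    have := hpe _ f hf 1
    rw [mul_one, mul_one, hC, mul_zero] at this
    exact this
  have hI : ∀ f ∈ compIdeal (pointsIdeal (↑Z : Set (Fin m → K))) (e + 1), eval p f = 0 := by
    intro f hf
    rw [← RingHom.mem_ker]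
    revert f
    change _ ≤ RingHom.ker (eval p)
    rw [compIdeal, Ideal.span_le]
    rintro f ⟨hf1, hf2⟩
    have h1 := hpe _ f hf2 1
    rw [mul_one, mul_one, hφ, theta_ideal _ u f hf2 hf1] at h1
    have := (mul_eq_zero.1 h1.symm).resolve_right hC
    exact this
  have hL : eval p (lin a) = 0 := by
    have h1 := hpe 1 (lin a) (lin_hom a) (lin l ^ e)
    have h2 := LinearMap.congr_fun (act_theta ha e u hu) (lin l ^ e)
    rw [actD_apply, LinearMap.zero_apply] at h2
    rw [← pow_add, add_comm 1 e] at h1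
    rw [h2] at h1
    exact (mul_eq_zero.1 h1.symm).resolve_right hC
  have hle : compIdeal (pointsIdeal (↑Z : Set (Fin m → K))) (e + 1) ⊔
      Ideal.span {lin a} ≤ RingHom.ker (eval p) := by
    refine sup_le (fun f hf => hI f hf) ?_
    rw [Ideal.span_le]
    rintro f rfl
    exact hL
  obtain ⟨N, hN⟩ := hb
  have hp0 : p = 0 := by
    ext i
    have h1 := hle (pow_mem_of_hilb (hN N le_rfl) (X i ^ N) (by
      simpa using (isHomogeneous_X K i).pow N))
    rw [RingHom.mem_ker, map_pow, eval_X] at h1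
    by_contra h; exact pow_ne_zero N h h1
  apply h0
  apply actD_socle e φ hDD
  intro x
  have hx : x = ∑ i, x i • (Pi.single i (1 : K) : Fin m → K) := by
    ext j; simp [Pi.single_apply]
  rw [hx, map_sum, LinearMap.sum_apply]
  apply Finset.sum_eq_zero
  intro i _
  have := congrFun hp0 i
  rw [map_smul, LinearMap.smul_apply, hc]
  simp only [hp, Pi.zero_apply] at this
  rw [this]; simp

end finalPart

section irredPart
variable {K : Type*} [Field K] [IsAlgClosed K] {m : ℕ} {Z : Finset (Fin m → K)} {a : Fin m → K}

/-- all multiples by linear forms -/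
noncomputable def PP (A : Submodule K (Z → K)) : Submodule K (Z → K) :=
  Submodule.map₂ (mulZ Z) ⊤ A

omit [IsAlgClosed K] in
lemma mem_PP {A : Submodule K (Z → K)} (x : Fin m → K) {u : Z → K} (hu : u ∈ A) :
    mulZ Z x u ∈ PP A := Submodule.apply_mem_map₂ _ trivial hu

omit [IsAlgClosed K] in
lemma PP_le {A B : Submodule K (Z → K)} (h : ∀ x, ∀ u ∈ A, mulZ Z x u ∈ B) : PP A ≤ B :=
  Submodule.map₂_le.2 fun x _ u hu => h x u hu

omit [IsAlgClosed K] in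
lemma PP_theta (t : ℕ) (A : Submodule K (Z → K)) : (PP A).map (theta Z a t) =
    Submodule.map₂ actD ⊤ (A.map (theta Z a (t + 1))) := by
  apply le_antisymm
  · rw [Submodule.map_le_iff_le_comap]
    apply PP_le
    intro x u hu
    rw [Submodule.mem_comap, theta_act]
    exact Submodule.apply_mem_map₂ _ trivial ⟨u, hu, rfl⟩
  · rw [Submodule.map₂_le]
    rintro x - _ ⟨u, hu, rfl⟩
    rw [← theta_act]
    exact ⟨_, mem_PP x hu, rfl⟩

lemma PP_count (ha : ∀ v ∈ Z, eval v (lin a) ≠ 0) (t : ℕ) (A : Submodule K (Z → K))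
    (hA : A ≤ NN Z (t + 1)) : Module.finrank K A +
      Module.finrank K ((PP A).map (theta Z a t)) ≤ Module.finrank K (PP A) := by
  have h1 := ab_finrank_split (theta Z a t) (PP A)
  have h2 := ab_map_inj_finrank (mulZ Z a) A (fun w _ h => mulZ_inj ha w h)
  have h3 : A.map (mulZ Z a) ≤ PP A ⊓ LinearMap.ker (theta Z a t) := by
    rintro _ ⟨u, hu, rfl⟩
    exact ⟨mem_PP a hu, theta_mul_zero ha t u (hA hu)⟩
  have h4 := Submodule.finrank_mono h3
  omega

lemma theta_map_finrank (ha : ∀ v ∈ Z, eval v (lin a) ≠ 0) {t : ℕ} (h0 : NN Z (t + 1) = ⊥)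
    (A : Submodule K (Z → K)) :
    Module.finrank K (A.map (theta Z a t)) = Module.finrank K A := by
  have h1 := ab_finrank_split (theta Z a t) A
  have h2 : A ⊓ LinearMap.ker (theta Z a t) = ⊥ := by
    rw [eq_bot_iff]
    rintro u ⟨-, hu⟩
    obtain ⟨v, hv, rfl⟩ := theta_ker ha t u hu
    rw [h0, Submodule.mem_bot] at hv
    subst hv; simp
  rw [h2, finrank_bot] at h1
  exact h1

omit [IsAlgClosed K] in
lemma theta_map_DD (t : ℕ) (A : Submodule K (Z → K)) : A.map (theta Z a t) ≤ DD K m t := by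
  rintro _ ⟨u, -, rfl⟩
  exact theta_DD Z a t u

omit [IsAlgClosed K] in
lemma PP_NN (t : ℕ) {A : Submodule K (Z → K)} (hA : A ≤ NN Z (t + 1)) : PP A ≤ NN Z t :=
  PP_le fun x u hu => mulZ_NN Z t x u (hA hu)

omit [IsAlgClosed K] in
lemma act_map {t : ℕ} {A : Submodule K (Z → K)} {w} (hw : w ∈ A.map (theta Z a (t + 1)))
    (x : Fin m → K) : actD x w ∈ (PP A).map (theta Z a t) := by
  obtain ⟨u, hu, rfl⟩ := hw
  rw [← theta_act]
  exact ⟨_, mem_PP x hu, rfl⟩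

lemma PP_grow (ha : ∀ v ∈ Z, eval v (lin a) ≠ 0) {n : ℕ} (h0 : NN Z (n + 2) = ⊥)
    (hp : ∀ φ ∈ (NN Z n).map (theta Z a n), ¬ AbPure actD φ)
    (hV : Module.finrank K ((NN Z n).map (theta Z a n)) ≤ n)
    (A : Submodule K (Z → K)) (hA : A ≤ NN Z (n + 1)) (hA0 : A ≠ ⊥) :
    Module.finrank K A + 1 ≤ Module.finrank K ((PP A).map (theta Z a n)) := by
  have hle : (PP A).map (theta Z a n) ≤ (NN Z n).map (theta Z a n) :=
    Submodule.map_mono (PP_NN n hA)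
  have hf := theta_map_finrank ha h0 A
  rw [← hf]
  refine ab_growth actD (DD K m) actD_comm actD_DD actD_socle n _ _ ?_ (theta_map_DD _ _)
    (theta_map_DD _ _) (fun w hw x => act_map hw x) ((Submodule.finrank_mono hle).trans hV) ?_
  · intro h
    rw [h, finrank_bot] at hf
    exact hA0 (Submodule.finrank_eq_zero.1 hf.symm)
  · intro w hw
    exact ab_pure_act_not actD (DD K m) actD_comm hp (actD_socle n)
      (theta_map_DD _ _ hw) (fun x => hle (act_map hw x))

lemma irred (ha : ∀ v ∈ Z, eval v (lin a) ≠ 0) {n : ℕ} (h0 : NN Z (n + 2) = ⊥)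
    (hp : ∀ φ ∈ (NN Z n).map (theta Z a n), ¬ AbPure actD φ)
    (hV : Module.finrank K ((NN Z n).map (theta Z a n)) ≤ n)
    (hne : NN Z (n + 1) ≠ ⊥)
    (hdim : Module.finrank K (NN Z n) ≤ 2 * Module.finrank K (NN Z (n + 1)) + 1)
    (x : Fin m → K) (hx : ∀ w ∈ (NN Z (n + 1)).map (theta Z a (n + 1)), actD x w = 0) :
    ∃ c : K, ∀ u ∈ NN Z (n + 1), mulZ Z (x - c • a) u = 0 := by
  have hker : ∀ u ∈ NN Z (n + 1), ∃ u' ∈ NN Z (n + 1), mulZ Z x u = mulZ Z a u' := by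
    intro u hu
    apply theta_ker ha
    rw [theta_act]
    exact hx _ ⟨u, hu, rfl⟩
  obtain ⟨c, u0, hu0, hu00, hc⟩ := ab_pencil (NN Z (n + 1)) (mulZ Z x) (mulZ Z a) hne
    (fun w _ h => mulZ_inj ha w h) hker
  refine ⟨c, ?_⟩
  set y := x - c • a with hy
  let Q : (Z → K) →ₗ[K] (Z → K) := LinearMap.pi fun z =>
    (eval z.1 (lin y) * (eval z.1 (lin a))⁻¹) • LinearMap.proj z
  have hQ : ∀ u z, Q u z = eval z.1 (lin y) * (eval z.1 (lin a))⁻¹ * u z := by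
    intro u z; simp [Q]
  have hQa : ∀ u, mulZ Z a (Q u) = mulZ Z y u := by
    intro u; ext z
    have := ha z.1 z.2
    rw [mulZ_apply, mulZ_apply, hQ]; field_simp
  have hQm : ∀ v u, Q (mulZ Z v u) = mulZ Z v (Q u) := by
    intro v u; ext z
    rw [mulZ_apply, hQ, hQ, mulZ_apply]; ring
  have hyu : ∀ u, mulZ Z y u = mulZ Z x u - c • mulZ Z a u := by
    intro u; rw [hy, map_sub, map_smul]; rfl
  have hQN : ∀ u ∈ NN Z (n + 1), Q u ∈ NN Z (n + 1) := by
    intro u hu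
    obtain ⟨u', hu', h⟩ := hker u hu
    have : Q u = u' - c • u := by
      rw [← sub_eq_zero]
      apply mulZ_inj ha
      rw [map_sub, hQa, hyu, h, map_sub, map_smul, sub_self]
    rw [this]
    exact sub_mem hu' (Submodule.smul_mem _ _ hu)
  set A := NN Z (n + 1) with hA
  set A1 := A ⊓ LinearMap.ker Q with hA1
  set A2 := A.map Q with hA2
  have hA2le : A2 ≤ A := by rintro _ ⟨u, hu, rfl⟩; exact hQN u hu
  have hsplit := ab_finrank_split Q A
  change Module.finrank K A2 + Module.finrank K A1 = _ at hsplit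
  have hA1ne : A1 ≠ ⊥ := by
    intro h
    apply hu00
    have : u0 ∈ A1 := ⟨hu0, by
      change Q u0 = 0
      apply mulZ_inj ha
      rw [hQa, hyu, hc, sub_self]⟩
    rwa [h, Submodule.mem_bot] at this
  have hbig : ∀ B ≤ A, B ≠ ⊥ → 2 * Module.finrank K B + 1 ≤ Module.finrank K (PP B) := by
    intro B hB hB0
    have h1 := PP_grow ha h0 hp hV B hB hB0
    have h2 := PP_count ha n B hB
    omega
  by_cases hA20 : A2 = ⊥
  · intro u hu
    have : Q u ∈ A2 := ⟨u, hu, rfl⟩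
    rw [hA20, Submodule.mem_bot] at this
    rw [← hQa, this, map_zero]
  · exfalso
    have h1 := hbig A1 inf_le_left hA1ne
    have h2 := hbig A2 hA2le hA20
    have h3 := ab_finrank_split Q (PP A)
    have h4 : PP A2 ≤ (PP A).map Q := by
      apply PP_le
      rintro v _ ⟨u, hu, rfl⟩
      exact ⟨mulZ Z v u, mem_PP v hu, hQm v u⟩
    have h5 : PP A1 ≤ PP A ⊓ LinearMap.ker Q := by
      apply PP_le
      rintro v u ⟨hu, hu'⟩
      refine ⟨mem_PP v hu, ?_⟩
      change Q u = 0 at hu'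
      change Q (mulZ Z v u) = 0
      rw [hQm, hu', map_zero]
    have h6 := Submodule.finrank_mono h4
    have h7 := Submodule.finrank_mono h5
    have h8 := Submodule.finrank_mono (PP_NN (Z := Z) n (le_refl A))
    omega

/-- iterated multiples -/
noncomputable def QQ (Z : Finset (Fin m → K)) (n : ℕ) : ℕ → Submodule K (Z → K)
  | 0 => NN Z (n + 1)
  | j + 1 => PP (QQ Z n j)

omit [IsAlgClosed K] in
lemma QQ_NN (n j d : ℕ) (h : d + j = n + 1) : QQ Z n j ≤ NN Z d := by
  induction j generalizing d with
  | zero => obtain rfl : d = n + 1 := by omega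
            exact le_rfl
  | succ j ih => exact PP_NN d (ih (d + 1) (by omega))

lemma QQ_T (ha : ∀ v ∈ Z, eval v (lin a) ≠ 0) {n k : ℕ} (h0 : NN Z (n + 2) = ⊥)
    (hp : ∀ φ ∈ (NN Z n).map (theta Z a n), ¬ AbPure actD φ)
    (hV : Module.finrank K ((NN Z n).map (theta Z a n)) ≤ n)
    (hk : 2 ≤ k) (hkn : k ≤ n) (hdim : Module.finrank K (NN Z (n + 1)) + 1 = k) :
    k ≤ Module.finrank K ((QQ Z n 1).map (theta Z a n)) ∧
    ∀ j d, d + j + 1 = n → min (k + 1) (n - j) ≤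
      Module.finrank K ((QQ Z n (j + 2)).map (theta Z a d)) := by
  have hne : NN Z (n + 1) ≠ ⊥ := by
    intro h; rw [h, finrank_bot] at hdim; omega
  have h1 : k ≤ Module.finrank K ((QQ Z n 1).map (theta Z a n)) := by
    have := PP_grow ha h0 hp hV _ le_rfl hne
    rw [hdim] at this
    exact this
  refine ⟨h1, ?_⟩
  intro j
  induction j with
  | zero =>
    intro d hd
    obtain rfl : n = d + 1 := by omega
    by_contra hcon
    push Not at hcon
    rw [zero_add, Nat.sub_zero] at hcon
    have h2 := ab_growth actD (DD K m) actD_comm actD_DD actD_socle d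
      ((QQ Z (d + 1) 1).map (theta Z a (d + 1))) ((QQ Z (d + 1) 2).map (theta Z a d)) (by
        intro h; rw [h, finrank_bot] at h1; omega) (theta_map_DD _ _)
      (theta_map_DD _ _) (fun w hw x => act_map hw x) (by omega) (fun w hw => hp w
        (Submodule.map_mono (QQ_NN _ 1 _ rfl) hw))
    omega
  | succ j ih =>
    intro d hd
    have h2 := ih (d + 1) (by omega)
    have h3 := ab_SS_min actD (DD K m) actD_comm actD_DD actD_socle d
      ((QQ Z n (j + 2)).map (theta Z a (d + 1))) (theta_map_DD _ _)
    rw [← PP_theta] at h3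
    change min _ _ ≤ Module.finrank K ((QQ Z n (j + 1 + 2)).map (theta Z a d)) at h3
    omega

lemma QQ_count (ha : ∀ v ∈ Z, eval v (lin a) ≠ 0) {n k : ℕ} (h0 : NN Z (n + 2) = ⊥)
    (hp : ∀ φ ∈ (NN Z n).map (theta Z a n), ¬ AbPure actD φ)
    (hV : Module.finrank K ((NN Z n).map (theta Z a n)) ≤ n)
    (hk : 2 ≤ k) (hkn : k ≤ n) (hdim : Module.finrank K (NN Z (n + 1)) + 1 = k) (j : ℕ)
    (hj : j ≤ n) : 2 * k + ∑ i ∈ Finset.range j, min (k + 1) (n - i) ≤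
      Module.finrank K (QQ Z n (j + 1)) + 1 := by
  obtain ⟨h1, h2⟩ := QQ_T ha h0 hp hV hk hkn hdim
  induction j with
  | zero =>
    have h3 := PP_count ha n (NN Z (n + 1)) le_rfl
    change _ + Module.finrank K ((QQ Z n 1).map (theta Z a n)) ≤ Module.finrank K (QQ Z n 1) at h3
    rw [Finset.range_zero, Finset.sum_empty]
    change _ ≤ Module.finrank K (QQ Z n 1) + 1
    omega
  | succ j ih =>
    have h3 := ih (by omega)
    obtain ⟨d, hd⟩ : ∃ d, d + j + 1 = n := ⟨n - j - 1, by omega⟩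
    have h4 := h2 j d hd
    have h5 := PP_count ha d (QQ Z n (j + 1)) (QQ_NN _ _ _ (by omega))
    change _ + Module.finrank K ((QQ Z n (j + 2)).map (theta Z a d)) ≤
      Module.finrank K (QQ Z n (j + 2)) at h5
    rw [Finset.sum_range_succ]
    change _ ≤ Module.finrank K (QQ Z n (j + 2)) + 1
    omega

lemma sum_min (k n : ℕ) (h : k ≤ n) : ∑ i ∈ Finset.range n, min (k + 1) (n - i) =
    Nat.choose (k + 1) 2 + (k + 1) * (n - k) := by
  have h1 : ∑ i ∈ Finset.range n, min (k + 1) (n - i)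
      = ∑ i ∈ Finset.range n, min (k + 1) (i + 1) := by
    rw [← Finset.sum_range_reflect]
    apply Finset.sum_congr rfl
    intro i hi
    rw [Finset.mem_range] at hi
    congr 1; omega
  rw [h1]
  have h2 : ∀ k : ℕ, ∑ i ∈ Finset.range k, (i + 1) = Nat.choose (k + 1) 2 := by
    intro k
    induction k with
    | zero => rfl
    | succ k ih =>
      rw [Finset.sum_range_succ, ih, Nat.choose_succ_succ' (k + 1) 1, Nat.choose_one_right]
      ring
  clear h1
  induction n, h using Nat.le_induction with
  | base =>
    rw [Nat.sub_self, mul_zero, add_zero, ← h2]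
    apply Finset.sum_congr rfl
    intro i hi
    rw [Finset.mem_range] at hi
    omega
  | succ n hn ih =>
    rw [Finset.sum_range_succ, ih, min_eq_left (by omega), show n + 1 - k = n - k + 1 by omega]
    ring

omit [IsAlgClosed K] in
lemma QQ_supp {n : ℕ} (z : Z) (hz : ∀ u ∈ NN Z (n + 1), u z = 0) (j : ℕ) :
    ∀ u ∈ QQ Z n j, u z = 0 := by
  induction j with
  | zero => exact hz
  | succ j ih =>
    have : PP (QQ Z n j) ≤ LinearMap.ker (LinearMap.proj z : (Z → K) →ₗ[K] K) := by
      apply PP_le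
      intro x u hu
      rw [LinearMap.mem_ker, LinearMap.proj_apply, mulZ_apply, ih u hu, mul_zero]
    intro u hu
    exact this hu

end irredPart

/-- **Corollary (many points on a plane).**  Let `Z ⊂ ℙ^r` be a finite reduced set of points
whose `h`-vector has value `k` in degree `n` and `k-1` in degree `n+1` (`n ≥ k ≥ 2`) and is `0`
in all degrees `≥ n+2`, and such that the linear systems `|[J]_n|` and `|[J]_{n+1}|` (`J` the
artinian reduction of `I_Z` by a general linear form `L` missing the points of `Z`) are
basepoint free (the schemes cut out by `⟨[I_Z]_n⟩ + (L)` and `⟨[I_Z]_{n+1}⟩ + (L)` are empty).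
Then at least `C(k+1,2) + (k+1)(n-k+2) - 3` points of `Z` lie on a plane: a two-dimensional
linear subspace of `ℙ^r`, cut out by `r-2` linearly independent linear forms. -/
theorem points_basepointFree_count_on_plane
    {K : Type*} [Field K] [IsAlgClosed K] {r n k : ℕ}
    (Z : Finset (Fin (r + 1) → K))
    (hZ0 : ∀ v ∈ Z, v ≠ (0 : Fin (r + 1) → K))
    (hZdist : ∀ v ∈ Z, ∀ w ∈ Z, v ≠ w → ∀ c : K, w ≠ c • v)
    (hk : 2 ≤ k) (hkn : k ≤ n)
    (hhn : hvec (pointsIdeal (↑Z : Set (Fin (r + 1) → K))) n = k)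
    (hhn1 : hvec (pointsIdeal (↑Z : Set (Fin (r + 1) → K))) (n + 1) + 1 = k)
    (hhtail : ∀ t, n + 2 ≤ t → hvec (pointsIdeal (↑Z : Set (Fin (r + 1) → K))) t = 0)
    (hbpf : ∃ L : MvPolynomial (Fin (r + 1)) K, L.IsHomogeneous 1 ∧ L ≠ 0 ∧
      (∀ v ∈ Z, eval v L ≠ 0) ∧
      (∃ N : ℕ, ∀ t, N ≤ t →
        hilb (compIdeal (pointsIdeal (↑Z : Set (Fin (r + 1) → K))) n ⊔ Ideal.span {L}) t = 0) ∧
      (∃ N : ℕ, ∀ t, N ≤ t →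
        hilb (compIdeal (pointsIdeal (↑Z : Set (Fin (r + 1) → K))) (n + 1) ⊔ Ideal.span {L}) t
          = 0)) :
    ∃ ℓ : Fin (r - 2) → MvPolynomial (Fin (r + 1)) K,
      (∀ i, (ℓ i).IsHomogeneous 1) ∧ LinearIndependent K ℓ ∧
      Nat.choose (k + 1) 2 + (k + 1) * (n - k + 2) - 3
        ≤ Set.ncard {v ∈ (↑Z : Set (Fin (r + 1) → K)) | ∀ i, eval v (ℓ i) = 0} := by
  classical
  obtain ⟨L, hLh, -, hLZ, hb, -⟩ := hbpf
  obtain ⟨a, rfl⟩ := exists_lin hLh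
  have ha := hLZ
  obtain ⟨h0, hd1, hd2⟩ := NN_dims ha hZ0 hZdist hk hkn hhn hhn1 hhtail
  have hp := no_pure_s15 ha (by omega : 1 ≤ n) hb
  have hVk : Module.finrank K ((NN Z n).map (theta Z a n)) = k := by
    have := finrank_theta ha n
    omega
  have hWk := theta_map_finrank ha h0 (NN Z (n + 1))
  have hne : NN Z (n + 1) ≠ ⊥ := by
    intro h; rw [h, finrank_bot] at hd1; omega
  have hWne : (NN Z (n + 1)).map (theta Z a (n + 1)) ≠ ⊥ := by
    intro h; rw [h, finrank_bot] at hWk; omega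
  let N : Submodule K (Fin (r + 1) → K) :=
    { carrier := {x | ∀ w ∈ (NN Z (n + 1)).map (theta Z a (n + 1)), actD x w = 0}
      zero_mem' := by intro w _; simp
      add_mem' := by
        intro x y hx hy w hw
        rw [map_add, LinearMap.add_apply, hx w hw, hy w hw, add_zero]
      smul_mem' := by
        intro c x hx w hw
        rw [map_smul, LinearMap.smul_apply, hx w hw, smul_zero] }
  let N0 : Submodule K (Fin (r + 1) → K) :=
    { carrier := {x | ∀ u ∈ NN Z (n + 1), mulZ Z x u = 0}
      zero_mem' := by intro w _; simp
      add_mem' := by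
        intro x y hx hy w hw
        rw [map_add, LinearMap.add_apply, hx w hw, hy w hw, add_zero]
      smul_mem' := by
        intro c x hx w hw
        rw [map_smul, LinearMap.smul_apply, hx w hw, smul_zero] }
  have hcod := ab_codim actD (DD K (r + 1)) actD_comm actD_DD actD_socle n
    ((NN Z (n + 1)).map (theta Z a (n + 1))) ((NN Z n).map (theta Z a n))
    (theta_map_DD _ _) (theta_map_DD _ _)
    (fun w hw x => Submodule.map_mono (PP_NN n le_rfl) (act_map hw x))
    (by omega) (by omega) hWne hp N (fun x => Iff.rfl)
  rw [Module.finrank_fintype_fun_eq_card, Fintype.card_fin] at hcod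
  have hNle : N ≤ N0 ⊔ Submodule.span K {a} := by
    intro x hx
    obtain ⟨c, hc⟩ := irred ha h0 hp (by omega) hne (by omega) x hx
    rw [show x = (x - c • a) + c • a by abel]
    exact Submodule.add_mem_sup hc (Submodule.smul_mem _ _ (Submodule.mem_span_singleton_self a))
  have h1 := Submodule.finrank_mono hNle
  have h2 := Submodule.finrank_add_le_finrank_add_finrank N0 (Submodule.span K {a})
  have h3 := finrank_span_le_card (R := K) ({a} : Set (Fin (r + 1) → K))
  simp only [Set.toFinset_singleton, Finset.card_singleton] at h3
  obtain ⟨f, hf⟩ := exists_linearIndependent_of_le_finrank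
    (show r - 2 ≤ Module.finrank K N0 by omega)
  have hf' : LinearIndependent K (fun i => (f i : Fin (r + 1) → K)) :=
    hf.map' N0.subtype N0.ker_subtype
  refine ⟨fun i => lin (f i), fun i => lin_hom _,
    hf'.map' lin (LinearMap.ker_eq_bot.2 lin_inj), ?_⟩
  set Y := Z.filter (fun v => ∀ i, eval v (lin (f i : Fin (r + 1) → K)) = 0) with hY
  have hcard : Set.ncard {v ∈ (↑Z : Set (Fin (r + 1) → K)) |
      ∀ i, eval v (lin (f i : Fin (r + 1) → K)) = 0} = Y.card := by
    rw [← Set.ncard_coe_finset]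
    congr 1
    ext v; simp [hY]
  rw [hcard]
  have hsupp : ∀ z : Z, z.1 ∉ Y → ∀ u ∈ QQ Z n (n + 1), u z = 0 := by
    intro z hz
    apply QQ_supp
    intro u hu
    have hz' : ¬ ∀ i, eval z.1 (lin (f i : Fin (r + 1) → K)) = 0 := by
      intro h
      exact hz (Finset.mem_filter.2 ⟨z.2, h⟩)
    push Not at hz'
    obtain ⟨i, hi⟩ := hz'
    have h5 := congrFun ((f i).2 u hu) z
    rw [mulZ_apply] at h5
    exact (mul_eq_zero.1 h5).resolve_left hi
  have hYZ : ∀ v : Y, v.1 ∈ Z := fun v => (Finset.mem_filter.1 v.2).1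
  have hle : Module.finrank K (QQ Z n (n + 1)) ≤ Y.card := by
    let ρ : QQ Z n (n + 1) →ₗ[K] (Y → K) :=
      (LinearMap.funLeft K K (fun v : Y => (⟨v.1, hYZ v⟩ : Z))) ∘ₗ (QQ Z n (n + 1)).subtype
    have hρ : Function.Injective ρ := by
      rw [← LinearMap.ker_eq_bot, LinearMap.ker_eq_bot']
      intro u hu
      apply Subtype.ext
      ext z
      by_cases hz : z.1 ∈ Y
      · exact congrFun hu ⟨z.1, hz⟩
      · exact hsupp z hz u u.2
    have := LinearMap.finrank_le_finrank_of_injective hρ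
    rwa [Module.finrank_fintype_fun_eq_card, Fintype.card_coe] at this
  have hcount := QQ_count ha h0 hp (by omega) hk hkn hd1 n le_rfl
  rw [sum_min k n hkn] at hcount
  have h6 : (k + 1) * (n - k + 2) = (k + 1) * (n - k) + (2 * k + 2) := by ring
  omega
end

section
/- Let K be a field, S = K[x,y], and J ⊆ S a homogeneous ideal such that for some integer n: (a) the forms in [J]_n have no common zero, i.e. the ideal generated by [J]_n is (x,y)-primary; (b) h_{S/J}(n+1) = h_{S/J}(n) − 1; and (c) J has no minimal generators in any degree > n. Then for all j ≥ n, h_{S/J}(j+1) = max{h_{S/J}(j) − 1, 0}. -/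
open MvPolynomial

theorem comp_X_mul {K : Type*} [Field K] {σ : Type*} (i : σ) (m : ℕ) (p : MvPolynomial σ K) :
    homogeneousComponent (m + 1) (X i * p) = X i * homogeneousComponent m p := by
  induction p using MvPolynomial.induction_on' with
  | monomial d r =>
    have h1 : (monomial d r : MvPolynomial σ K) ∈ homogeneousSubmodule σ K d.degree :=
      isHomogeneous_monomial r rfl
    have h2 : (X i * monomial d r : MvPolynomial σ K) ∈ homogeneousSubmodule σ K (1 + d.degree) :=
      (isHomogeneous_X K i).mul h1
    rw [homogeneousComponent_of_mem h1, homogeneousComponent_of_mem h2]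
    by_cases h : m = d.degree
    · rw [if_pos (by omega), if_pos (by omega)]
    · rw [if_neg (by omega), if_neg (by omega), mul_zero]
  | add p q hp hq => rw [mul_add, map_add, map_add, hp, hq, mul_add]

theorem poly_split {K : Type*} [Field K] (c : MvPolynomial (Fin 2) K) :
    ∃ (r : K) (p q : MvPolynomial (Fin 2) K), c = C r + X 0 * p + X 1 * q := by
  induction c using MvPolynomial.induction_on with
  | C a => exact ⟨a, 0, 0, by simp⟩
  | add a b ha hb =>
    obtain ⟨r, p, q, rfl⟩ := ha
    obtain ⟨r', p', q', rfl⟩ := hb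
    exact ⟨r + r', p + p', q + q', by rw [C_add]; ring⟩
  | mul_X a i _ =>
    fin_cases i
    · exact ⟨0, a, 0, by simp [mul_comm]⟩
    · exact ⟨0, 0, a, by simp [mul_comm]⟩

theorem compIdeal_le {K : Type*} [Field K] {σ : Type*} (J : Ideal (MvPolynomial σ K)) (m : ℕ) :
    compIdeal J m ≤ J := Ideal.span_le.2 (fun _ h => h.1)

theorem comp_split {K : Type*} [Field K] (J : Ideal (MvPolynomial (Fin 2) K))
    (hJhom : ∀ f ∈ J, ∀ t : ℕ, homogeneousComponent t f ∈ J) (m : ℕ)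
    (f : MvPolynomial (Fin 2) K) (hf : f ∈ compIdeal J m) :
    ∃ a b : MvPolynomial (Fin 2) K, a ∈ J ∧ b ∈ J ∧ a.IsHomogeneous m ∧ b.IsHomogeneous m ∧
      homogeneousComponent (m + 1) f = X 0 * a + X 1 * b := by
  have key : ∀ c g : MvPolynomial (Fin 2) K, g ∈ J → g.IsHomogeneous m →
      ∃ a b : MvPolynomial (Fin 2) K, a ∈ J ∧ b ∈ J ∧ a.IsHomogeneous m ∧ b.IsHomogeneous m ∧
      homogeneousComponent (m + 1) (c * g) = X 0 * a + X 1 * b := by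
    intro c g hg hgm
    obtain ⟨r, p, q, rfl⟩ := poly_split c
    refine ⟨homogeneousComponent m (p * g), homogeneousComponent m (q * g),
      hJhom _ (J.mul_mem_left _ hg) _, hJhom _ (J.mul_mem_left _ hg) _,
      homogeneousComponent_isHomogeneous _ _, homogeneousComponent_isHomogeneous _ _, ?_⟩
    have h0 : homogeneousComponent (m + 1) g = 0 := by
      have : g ∈ homogeneousSubmodule (Fin 2) K m := hgm
      rw [homogeneousComponent_of_mem this, if_neg (by omega)]
    rw [add_mul, add_mul, mul_assoc, mul_assoc, map_add, map_add, comp_X_mul, comp_X_mul,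
      homogeneousComponent_C_mul, h0, mul_zero, zero_add]
  obtain ⟨l, hl⟩ := (Finsupp.mem_span_iff_linearCombination _ _ _).1 hf
  rw [← hl, Finsupp.linearCombination_apply, Finsupp.sum]
  refine Finset.sum_induction (fun i => l i • (i : MvPolynomial (Fin 2) K))
    (fun f => ∃ a b : MvPolynomial (Fin 2) K,
      a ∈ J ∧ b ∈ J ∧ a.IsHomogeneous m ∧ b.IsHomogeneous m ∧
      homogeneousComponent (m + 1) f = X 0 * a + X 1 * b) ?_ ?_ ?_
  · rintro f g ⟨a, b, h1, h2, h3, h4, h5⟩ ⟨a', b', h1', h2', h3', h4', h5'⟩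
    exact ⟨a + a', b + b', J.add_mem h1 h1', J.add_mem h2 h2', h3.add h3', h4.add h4', by
      rw [map_add, h5, h5']; ring⟩
  · exact ⟨0, 0, J.zero_mem, J.zero_mem, isHomogeneous_zero _ _ _, isHomogeneous_zero _ _ _,
      by simp⟩
  · intro i _
    exact key _ _ i.2.1 i.2.2

instance hilb_finite {K : Type*} [Field K] (J : Ideal (MvPolynomial (Fin 2) K)) (t : ℕ) :
    Module.Finite K ((homogeneousSubmodule (Fin 2) K t).map
      (Ideal.Quotient.mkₐ K J).toLinearMap) :=
  Module.Finite.iff_fg.2 ((homogeneousSubmodule_fg (Fin 2) K t).map _)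

theorem hilb_zero {K : Type*} [Field K] (J : Ideal (MvPolynomial (Fin 2) K)) (t : ℕ)
    (h : ∀ f : MvPolynomial (Fin 2) K, f.IsHomogeneous t → f ∈ J) : hilb J t = 0 := by
  unfold hilb
  have : (homogeneousSubmodule (Fin 2) K t).map (Ideal.Quotient.mkₐ K J).toLinearMap = ⊥ := by
    rw [eq_bot_iff]
    rintro _ ⟨f, hf, rfl⟩
    exact Ideal.Quotient.eq_zero_iff_mem.2 (h f hf)
  rw [this]
  exact finrank_bot _ _

theorem all_mem {K : Type*} [Field K] (J : Ideal (MvPolynomial (Fin 2) K)) (N : ℕ)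
    (h : ∀ f : MvPolynomial (Fin 2) K, f.IsHomogeneous N → f ∈ J) (k : ℕ) :
    ∀ f : MvPolynomial (Fin 2) K, f.IsHomogeneous (N + k) → f ∈ J := by
  induction k with
  | zero => exact h
  | succ k ih =>
    intro f hf
    obtain ⟨r, p, q, hc⟩ := poly_split f
    have h0 : homogeneousComponent (N + k + 1) (C r : MvPolynomial (Fin 2) K) = 0 := by
      have : (C r : MvPolynomial (Fin 2) K) ∈ homogeneousSubmodule (Fin 2) K 0 :=
        isHomogeneous_C _ r
      rw [homogeneousComponent_of_mem this, if_neg (by omega)]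
    have h1 : homogeneousComponent (N + k + 1) f = f := homogeneousComponent_eq_self hf
    rw [← h1, hc, map_add, map_add, h0, comp_X_mul, comp_X_mul, zero_add]
    exact J.add_mem (J.mul_mem_left _ (ih _ (homogeneousComponent_isHomogeneous _ _)))
      (J.mul_mem_left _ (ih _ (homogeneousComponent_isHomogeneous _ _)))

theorem koszul {K : Type*} [Field K] (t : ℕ) (a b : MvPolynomial (Fin 2) K)
    (ha : a.IsHomogeneous (t + 1)) (h : X 0 * a + X 1 * b = 0) :
    ∃ c : MvPolynomial (Fin 2) K, c.IsHomogeneous t ∧ a = X 1 * c ∧ b = - (X 0 * c) := by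
  have hd : (X 1 : MvPolynomial (Fin 2) K) ∣ X 0 * a :=
    ⟨-b, by linear_combination h⟩
  have hd' : (X 1 : MvPolynomial (Fin 2) K) ∣ a := by
    rcases (X_prime (R := K) (i := (1 : Fin 2))).dvd_or_dvd hd with h' | h'
    · rw [X_dvd_X] at h'
      simp at h'
    · exact h'
  obtain ⟨c, hc⟩ := hd'
  have hc' : a = X 1 * homogeneousComponent t c := by
    rw [← comp_X_mul, ← hc, homogeneousComponent_eq_self ha]
  refine ⟨_, homogeneousComponent_isHomogeneous t c, hc', ?_⟩
  have hX : (X 1 : MvPolynomial (Fin 2) K) ≠ 0 := X_ne_zero _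
  apply mul_left_cancel₀ hX
  rw [hc'] at h
  linear_combination h

theorem hilb_convex {K : Type*} [Field K] (J : Ideal (MvPolynomial (Fin 2) K))
    (hJhom : ∀ f ∈ J, ∀ t : ℕ, homogeneousComponent t f ∈ J) (t : ℕ)
    (hgen : ∀ f ∈ J, f.IsHomogeneous (t + 1 + 1) → f ∈ compIdeal J (t + 1)) :
    2 * hilb J (t + 1) ≤ hilb J t + hilb J (t + 2) := by
  let Q := MvPolynomial (Fin 2) K ⧸ J
  let M : ℕ → Submodule K Q := fun t =>
    (homogeneousSubmodule (Fin 2) K t).map (Ideal.Quotient.mkₐ K J).toLinearMap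
  have hM : ∀ t, Module.Finite K (M t) := fun t => hilb_finite J t
  let x : Q := Ideal.Quotient.mk J (X 0)
  let y : Q := Ideal.Quotient.mk J (X 1)
  let φ : M (t + 1) × M (t + 1) →ₗ[K] Q :=
    ((LinearMap.mulLeft K x).comp (M (t + 1)).subtype).coprod
      ((LinearMap.mulLeft K y).comp (M (t + 1)).subtype)
  let ψ : Q →ₗ[K] Q × Q := (LinearMap.mulLeft K y).prod (-(LinearMap.mulLeft K x))
  let ι : M (t + 1) × M (t + 1) →ₗ[K] Q × Q := (M (t + 1)).subtype.prodMap (M (t + 1)).subtype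
  have hι : Function.Injective ι :=
    Function.Injective.prodMap Subtype.val_injective Subtype.val_injective
  have hr : LinearMap.range φ ≤ M (t + 2) := by
    rintro _ ⟨⟨⟨_, a, ha, rfl⟩, ⟨_, b, hb, rfl⟩⟩, rfl⟩
    refine ⟨X 0 * a + X 1 * b, ?_, ?_⟩
    · have h1 := (isHomogeneous_X K (0 : Fin 2)).mul ha
      have h2 := (isHomogeneous_X K (1 : Fin 2)).mul hb
      rw [show 1 + (t + 1) = t + 2 by omega] at h1 h2
      exact h1.add h2
    · simp [φ, x, y]
  have hk : (LinearMap.ker φ).map ι ≤ (M t).map ψ := by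
    rintro _ ⟨⟨⟨_, a, ha, rfl⟩, ⟨_, b, hb, rfl⟩⟩, hab, rfl⟩
    have hmem : X 0 * a + X 1 * b ∈ J := by
      rw [← Ideal.Quotient.eq_zero_iff_mem]
      simpa [φ, x, y] using hab
    have hhom : (X 0 * a + X 1 * b).IsHomogeneous (t + 1 + 1) := by
      have h1 := (isHomogeneous_X K (0 : Fin 2)).mul ha
      have h2 := (isHomogeneous_X K (1 : Fin 2)).mul hb
      rw [show 1 + (t + 1) = t + 1 + 1 by omega] at h1 h2
      exact h1.add h2
    obtain ⟨a', b', ha', hb', hah, hbh, he⟩ := comp_split J hJhom _ _ (hgen _ hmem hhom)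
    rw [homogeneousComponent_eq_self hhom] at he
    have hsub : (a - a').IsHomogeneous (t + 1) := Submodule.sub_mem _ ha hah
    obtain ⟨c, hc, h1, h2⟩ := koszul t (a - a') (b - b') hsub (by linear_combination he)
    refine ⟨Ideal.Quotient.mk J c, ⟨c, hc, rfl⟩, ?_⟩
    have e1 : Ideal.Quotient.mk J a = y * Ideal.Quotient.mk J c := by
      have := congrArg (Ideal.Quotient.mk J) h1
      rw [map_sub, Ideal.Quotient.eq_zero_iff_mem.2 ha', sub_zero, map_mul] at this
      exact this
    have e2 : Ideal.Quotient.mk J b = -(x * Ideal.Quotient.mk J c) := by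
      have := congrArg (Ideal.Quotient.mk J) h2
      rw [map_sub, Ideal.Quotient.eq_zero_iff_mem.2 hb', sub_zero, map_neg, map_mul] at this
      exact this
    exact Prod.ext e1.symm e2.symm
  have d1 := LinearMap.finrank_range_add_finrank_ker φ
  have d2 : Module.finrank K (LinearMap.range φ) ≤ Module.finrank K (M (t + 2)) :=
    Submodule.finrank_mono hr
  have d3 : Module.finrank K ((LinearMap.ker φ).map ι) ≤ Module.finrank K ((M t).map ψ) :=
    Submodule.finrank_mono hk
  have d4 : Module.finrank K ((LinearMap.ker φ).map ι) = Module.finrank K (LinearMap.ker φ) :=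
    (LinearEquiv.finrank_eq (Submodule.equivMapOfInjective ι hι _)).symm
  have d5 : Module.finrank K ((M t).map ψ) ≤ Module.finrank K (M t) :=
    Submodule.finrank_map_le ψ (M t)
  rw [Module.finrank_prod] at d1
  change 2 * Module.finrank K (M (t + 1)) ≤ Module.finrank K (M t) + Module.finrank K (M (t + 2))
  omega

/-- **Proposition (extending Gotzmann's theorem in two variables).**
Let `K` be a field, `S = K[x,y]`, and `J ⊆ S` a homogeneous ideal such that for some `n`:
(a) the linear system defined by `[J]_n` has no base locus, i.e. the ideal generated by `[J]_n`
is `(x,y)`-primary (it contains all forms of some degree `N`);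
(b) `h_{S/J}(n+1) = h_{S/J}(n) - 1`; and
(c) `J` has no minimal generators in degree `> n`, i.e. `[J]_{t+1} = S_1·[J]_t` for all `t ≥ n`.
Then for all `j ≥ n`, `h_{S/J}(j+1) = max {h_{S/J}(j) - 1, 0}` (which is truncated subtraction
on `ℕ`). -/
theorem two_variables_hilbert_decreases_by_one
    {K : Type*} [Field K]
    (J : Ideal (MvPolynomial (Fin 2) K))
    (hJhom : ∀ f ∈ J, ∀ t : ℕ, homogeneousComponent t f ∈ J)
    (n : ℕ)
    (hbpf : ∃ N : ℕ, ∀ f : MvPolynomial (Fin 2) K, f.IsHomogeneous N → f ∈ compIdeal J n)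
    (hdrop : hilb J (n + 1) + 1 = hilb J n)
    (hnomingen : ∀ t : ℕ, n ≤ t → ∀ f ∈ J, f.IsHomogeneous (t + 1) → f ∈ compIdeal J t) :
    ∀ j : ℕ, n ≤ j → hilb J (j + 1) = hilb J j - 1 := by
  obtain ⟨N, hN⟩ := hbpf
  have hN' : ∀ f : MvPolynomial (Fin 2) K, f.IsHomogeneous N → f ∈ J :=
    fun f hf => compIdeal_le J n (hN f hf)
  have hz : ∀ k, hilb J (N + k) = 0 := fun k => hilb_zero J _ (all_mem J N hN' k)
  have hconv : ∀ t, n ≤ t → 2 * hilb J (t + 1) ≤ hilb J t + hilb J (t + 2) :=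
    fun t ht => hilb_convex J hJhom t (hnomingen (t + 1) (by omega))
  intro j hj
  have hlow : hilb J j ≤ hilb J (j + 1) + 1 := by
    induction j, hj using Nat.le_induction with
    | base => omega
    | succ j hj ih =>
      have := hconv j hj
      rw [show j + 1 + 1 = j + 2 by omega]
      omega
  by_cases hup : hilb J (j + 1) < hilb J j
  · omega
  · have hmono : ∀ k, hilb J j ≤ hilb J (j + k) ∧ hilb J (j + k) ≤ hilb J (j + k + 1) := by
      intro k
      induction k with
      | zero => exact ⟨le_rfl, by simpa using hup⟩
      | succ k ih =>
        have := hconv (j + k) (by omega)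
        rw [show j + (k + 1) + 1 = j + k + 2 by omega, show j + (k + 1) = j + k + 1 by omega]
        omega
    have h1 := (hmono N).1
    have h2 := (hmono 1).1
    have h3 := hz j
    have h4 := hz (j + 1)
    rw [show N + j = j + N by omega] at h3
    have h5 : hilb J (j + 1) ≤ hilb J (j + N + 1) := by
      have hm : Monotone (fun k => hilb J (j + k)) :=
        monotone_nat_of_le_succ (fun k => (hmono k).2)
      have h6 := hm (show 1 ≤ N + 1 by omega)
      simp only [← Nat.add_assoc] at h6
      exact h6
    rw [show N + (j + 1) = j + N + 1 by omega] at h4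
    omega
end

section
/- Let n be a positive integer and k an integer with n+1 ≤ k < C(n+2,2). Write the n-binomial expansion of k as k = C(n+1,n) + C(n,n−1) + ⋯ + C(n−q+2,n−q+1) + m, where the first q terms are the consecutive binomials C(a+1,a) for a = n, n−1, …, n−q+1, and m = C(n−q,n−q) + ⋯ + C(n−q−m+1,n−q−m+1) consists of m terms equal to 1 (with 0 ≤ m ≤ n−q, and m = 0 if q = n). Then k^{⟨n⟩} = C(n+2,n+1) + C(n+1,n) + ⋯ + C(n−q+3,n−q+2) + m, and consequently k^{⟨n⟩} − k = q; i.e. the maximal Macaulay growth of k from degree n to degree n+1 exceeds k by exactly the number q of leading terms of the form C(a+1,a) in its n-binomial expansion. -/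
open MvPolynomial

/-- Macaulay's bound `k^{⟨i⟩}`: if `k = C(k_i,i) + C(k_{i-1},i-1) + ⋯ + C(k_j,j)` is the
`i`-binomial expansion of `k`, then `macaulayUp i k = C(k_i+1,i+1) + ⋯ + C(k_j+1,j+1)`. -/
def macaulayUp : ℕ → ℕ → ℕ
  | 0, _ => 0
  | i + 1, k =>
    if k = 0 then 0
    else
      Nat.choose (Nat.findGreatest (fun b => Nat.choose b (i + 1) ≤ k) (k + i + 1) + 1) (i + 2) +
        macaulayUp i
          (k - Nat.choose (Nat.findGreatest (fun b => Nat.choose b (i + 1) ≤ k) (k + i + 1)) (i + 1))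

theorem mu_step (i k b : ℕ) (h0 : k ≠ 0) (hb : b ≤ k + i + 1) (h1 : Nat.choose b (i + 1) ≤ k)
    (h2 : k < Nat.choose (b + 1) (i + 1)) :
    macaulayUp (i + 1) k =
      Nat.choose (b + 1) (i + 2) + macaulayUp i (k - Nat.choose b (i + 1)) := by
  have hf : Nat.findGreatest (fun b => Nat.choose b (i + 1) ≤ k) (k + i + 1) = b := by
    rw [Nat.findGreatest_eq_iff]
    refine ⟨hb, fun _ => h1, fun c hc _ hle => ?_⟩
    have : Nat.choose (b + 1) (i + 1) ≤ Nat.choose c (i + 1) := Nat.choose_le_choose _ hc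
    omega
  rw [macaulayUp, if_neg h0, hf]

theorem mu_ones (n : ℕ) : ∀ m, m ≤ n → macaulayUp n m = m := by
  induction n with
  | zero => intro m hm; simp [macaulayUp]; omega
  | succ i ih =>
    intro m hm
    by_cases h0 : m = 0
    · simp [macaulayUp, h0]
    · rw [mu_step i m (i + 1) h0 (by omega) (by simp; omega)
        (by rw [Nat.choose_succ_self_right]; omega)]
      simp only [Nat.choose_self]
      rw [ih (m - 1) (by omega)]
      omega

theorem mu_bound (p m : ℕ) (hm : m ≤ p) (q : ℕ) :
    (∑ j ∈ Finset.range q, (p + j + 2)) + m < Nat.choose (p + q + 2) 2 := by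
  induction q with
  | zero =>
    have h := Nat.choose_succ_succ (p + 1) 1
    have e : p + 0 + 2 = (p + 1).succ := by omega
    rw [e, h]
    simp
    omega
  | succ q ih =>
    have h := Nat.choose_succ_succ (p + q + 2) 1
    have e : p + (q + 1) + 2 = (p + q + 2).succ := by omega
    rw [Finset.sum_range_succ, e, h]
    simp
    omega

theorem mu_stair (p m : ℕ) (hm : m ≤ p) (q : ℕ) :
    macaulayUp (p + q) ((∑ j ∈ Finset.range q, (p + j + 2)) + m) =
      (∑ j ∈ Finset.range q, (p + j + 3)) + m := by
  induction q with
  | zero => simpa using mu_ones p m hm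
  | succ q ih =>
    have hb := mu_bound p m hm (q + 1)
    have c1 : Nat.choose (p + q + 2) (p + q + 1) = p + q + 2 :=
      Nat.choose_succ_self_right (p + q + 1)
    have c2 : Nat.choose (p + q + 2 + 1) (p + q + 2) = p + q + 3 :=
      Nat.choose_succ_self_right (p + q + 2)
    have c3 : Nat.choose (p + q + 2 + 1) (p + q + 1) = Nat.choose (p + (q + 1) + 2) 2 := by
      have := Nat.choose_symm_add (a := p + q + 1) (b := 2)
      rw [show p + (q + 1) + 2 = p + q + 1 + 2 by omega, ← this]
    rw [Finset.sum_range_succ] at hb ⊢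
    rw [Finset.sum_range_succ, ← add_assoc p q 1, mu_step (p + q) _ (p + q + 2) (by omega)
      (by omega) (by omega) (by omega), c1, c2]
    rw [show ∑ j ∈ Finset.range q, (p + j + 2) + (p + q + 2) + m - (p + q + 2)
      = ∑ j ∈ Finset.range q, (p + j + 2) + m by omega, ih]
    omega

/-- **Binomial identity (leading staircase).**  Let `n ≥ 1` and let `k` have `n`-binomial
expansion `k = C(n+1,n) + C(n,n-1) + ⋯ + C(n-q+2,n-q+1) + m`, where the first `q ≥ 1` terms are
the consecutive binomials `C(a+1,a)` for `a = n, n-1, …, n-q+1` and `m ≤ n-q` counts trailing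
terms equal to `1` (so `m = 0` when `q = n`); this covers exactly the range
`n+1 ≤ k < C(n+2,2)`.  Then
`k^{⟨n⟩} = C(n+2,n+1) + C(n+1,n) + ⋯ + C(n-q+3,n-q+2) + m`, and consequently
`k^{⟨n⟩} - k = q`: the maximal Macaulay growth exceeds `k` by exactly the number `q` of leading
terms of the form `C(a+1,a)`. -/
theorem macaulayUp_of_staircase_expansion
    (n q m k : ℕ) (hn : 1 ≤ n) (hq1 : 1 ≤ q) (hqn : q ≤ n) (hm : m ≤ n - q)
    (hk : k = (∑ a ∈ Finset.Ico (n - q + 1) (n + 1), Nat.choose (a + 1) a) + m) :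
    macaulayUp n k = (∑ a ∈ Finset.Ico (n - q + 2) (n + 2), Nat.choose (a + 1) a) + m ∧
      macaulayUp n k = k + q := by
  obtain ⟨p, rfl⟩ := Nat.exists_eq_add_of_le' hqn
  rw [Nat.add_sub_cancel] at hm hk ⊢
  have h1 : ∑ a ∈ Finset.Ico (p + 1) (p + q + 1), Nat.choose (a + 1) a
      = ∑ j ∈ Finset.range q, (p + j + 2) := by
    rw [Finset.sum_Ico_eq_sum_range, show p + q + 1 - (p + 1) = q by omega]
    refine Finset.sum_congr rfl fun j _ => ?_
    rw [Nat.choose_succ_self_right]; omega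
  have h2 : ∑ a ∈ Finset.Ico (p + 2) (p + q + 2), Nat.choose (a + 1) a
      = ∑ j ∈ Finset.range q, (p + j + 3) := by
    rw [Finset.sum_Ico_eq_sum_range, show p + q + 2 - (p + 2) = q by omega]
    refine Finset.sum_congr rfl fun j _ => ?_
    rw [Nat.choose_succ_self_right]; omega
  have h3 : ∑ j ∈ Finset.range q, (p + j + 3) = ∑ j ∈ Finset.range q, (p + j + 2) + q := by
    have : ∑ j ∈ Finset.range q, (p + j + 3) = ∑ j ∈ Finset.range q, ((p + j + 2) + 1) := rfl
    rw [this, Finset.sum_add_distrib]; simp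
  have h4 := mu_stair p m hm q
  rw [hk, h1, h2, h4]
  exact ⟨rfl, by omega⟩
end
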